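/- arXiv:1111.5864 — 10 statements merged into one kernel-verified Lean document; each statement's English description precedes it below -/
import Mathlib

section
/- Let G be a connected graph of order n ≥ 3 and let f : V(G₁) → V(G₂) be any function between two disjoint copies G₁, G₂ of G. Then the metric dimension of the functigraph C(G, f) satisfies dim(C(G, f)) ≤ 2n − 3. -/
/-- The functigraph `C(G, f)`: two disjoint copies of `G` (as `Sum.inl`/`Sum.inr`),
with an edge from each `Sum.inl u` to `Sum.inr (f u)`. -/
def functigraph {V : Type*} (G : SimpleGraph V) (f : V → V) : SimpleGraph (V ⊕ V) :=
  SimpleGraph.fromRel (fun x y =>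
    match x, y with
    | Sum.inl a, Sum.inl b => G.Adj a b
    | Sum.inr a, Sum.inr b => G.Adj a b
    | Sum.inl a, Sum.inr b => f a = b
    | Sum.inr _, Sum.inl _ => False)

/-- `S` is a resolving set of `H`: every pair of distinct vertices is resolved by some `w ∈ S`. -/
def IsResolving {V : Type*} (H : SimpleGraph V) (S : Set V) : Prop :=
  ∀ x y : V, x ≠ y → ∃ w ∈ S, H.dist x w ≠ H.dist y w

/-- The metric dimension of `H`: minimum cardinality of a (finite) resolving set. -/
noncomputable def metricDim {V : Type*} (H : SimpleGraph V) : ℕ :=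
  sInf {k | ∃ S : Set V, IsResolving H S ∧ S.Finite ∧ S.ncard = k}

/-- The cycle graph on `ZMod n` (for `n ≥ 3`): `i` is adjacent to `i ± 1`. -/
def cycGraph (n : ℕ) : SimpleGraph (ZMod n) :=
  SimpleGraph.fromRel (fun i j => j = i + 1)

/-- The closed neighborhood `N[S]` of a set `S` in `H`. -/
def closedNbhd {V : Type*} (H : SimpleGraph V) (S : Set V) : Set V :=
  S ∪ {x | ∃ s ∈ S, H.Adj x s}

section helpers
variable {V : Type*} (G : SimpleGraph V) (f : V → V)

theorem fg_ll (a b : V) : (functigraph G f).Adj (Sum.inl a) (Sum.inl b) ↔ G.Adj a b := by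
  simp only [functigraph, SimpleGraph.fromRel_adj]
  constructor
  · rintro ⟨-, h | h⟩
    · exact h
    · exact h.symm
  · intro h
    exact ⟨by simpa using h.ne, Or.inl h⟩

theorem fg_rr (a b : V) : (functigraph G f).Adj (Sum.inr a) (Sum.inr b) ↔ G.Adj a b := by
  simp only [functigraph, SimpleGraph.fromRel_adj]
  constructor
  · rintro ⟨-, h | h⟩
    · exact h
    · exact h.symm
  · intro h
    exact ⟨by simpa using h.ne, Or.inl h⟩

theorem fg_lr (a b : V) : (functigraph G f).Adj (Sum.inl a) (Sum.inr b) ↔ f a = b := by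
  simp [functigraph, SimpleGraph.fromRel_adj]

theorem fg_rl (a b : V) : (functigraph G f).Adj (Sum.inr b) (Sum.inl a) ↔ f a = b := by
  rw [SimpleGraph.adj_comm, fg_lr]

theorem fg_conn (hG : G.Connected) : (functigraph G f).Connected := by
  have hr : ∀ a b : V, (functigraph G f).Reachable (Sum.inr a) (Sum.inr b) := fun a b =>
    (hG.preconnected a b).map
      (⟨Sum.inr, fun h => (fg_rr G f _ _).2 h⟩ : G →g functigraph G f)
  obtain ⟨v⟩ := hG.nonempty
  have h : ∀ x, (functigraph G f).Reachable x (Sum.inr v) := by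
    rintro (a | a)
    · exact ((fg_lr G f a (f a)).2 rfl).reachable.trans (hr _ _)
    · exact hr _ _
  haveI : Nonempty (V ⊕ V) := ⟨Sum.inr v⟩
  exact ⟨fun x y => (h x).trans (h y).symm⟩

/-- `x` and `y` are separated by adjacency to a vertex outside `T`. -/
def AdjSep {W : Type*} (H : SimpleGraph W) (T : Set W) (x y : W) : Prop :=
  ∃ w, w ∉ T ∧ ¬ (H.Adj x w ↔ H.Adj y w)

theorem dim_le {W : Type*} [Fintype W] (H : SimpleGraph W) (hH : H.Connected) (u v w : W)
    (huv : u ≠ v) (huw : u ≠ w) (hvw : v ≠ w)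
    (h1 : AdjSep H {u, v, w} u v) (h2 : AdjSep H {u, v, w} u w)
    (h3 : AdjSep H {u, v, w} v w) : metricDim H ≤ Fintype.card W - 3 := by
  classical
  have key : ∀ x y, AdjSep H {u, v, w} x y →
      ∃ z ∈ ({u, v, w} : Set W)ᶜ, H.dist x z ≠ H.dist y z := by
    rintro x y ⟨z, hz, h⟩
    refine ⟨z, hz, fun e => h ?_⟩
    rw [← SimpleGraph.dist_eq_one_iff_adj, ← SimpleGraph.dist_eq_one_iff_adj, e]
  have symm : ∀ x y, AdjSep H {u, v, w} x y → AdjSep H {u, v, w} y x := by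
    rintro x y ⟨z, hz, h⟩
    exact ⟨z, hz, fun e => h e.symm⟩
  apply Nat.sInf_le
  refine ⟨({u, v, w} : Set W)ᶜ, ?_, Set.toFinite _, ?_⟩
  · intro x y hxy
    by_cases hx : x ∈ ({u, v, w} : Set W)
    · by_cases hy : y ∈ ({u, v, w} : Set W)
      · apply key
        rcases hx with rfl | rfl | rfl <;> rcases hy with rfl | rfl | rfl <;>
          first | exact absurd rfl hxy | assumption | (apply symm; assumption)
      · refine ⟨y, hy, ?_⟩
        rw [SimpleGraph.dist_self]
        exact (hH.pos_dist_of_ne hxy).ne'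
    · refine ⟨x, hx, ?_⟩
      rw [SimpleGraph.dist_self]
      exact (hH.pos_dist_of_ne hxy.symm).ne
  · rw [Set.ncard_compl, Nat.card_eq_fintype_card, Set.ncard_eq_three.2 ⟨u, v, w, huv, huw, hvw, rfl⟩]

end helpers

theorem fg_two {V : Type*} [Fintype V] (G : SimpleGraph V)
    (hG : G.Connected) (f : V → V) (a b c : V) (hab : f a ≠ f b)
    (hc : G.Adj (f a) c) (hcb : c ≠ f b) :
    metricDim (functigraph G f) ≤ Fintype.card (V ⊕ V) - 3 := by
  have hab' : a ≠ b := fun h => hab (h ▸ rfl)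
  refine dim_le _ (fg_conn G f hG) (Sum.inl a) (Sum.inl b) (Sum.inr (f a))
    (by simpa) (by simp) (by simp) ⟨Sum.inr (f b), ?_, ?_⟩ ⟨Sum.inr c, ?_, ?_⟩
    ⟨Sum.inr c, ?_, ?_⟩
  · simp [hab.symm]
  · simp [fg_lr, hab]
  · simp [hc.ne']
  · simp [fg_lr, fg_rr, hc, hc.ne]
  · simp [hc.ne']
  · simp [fg_lr, fg_rr, hc, hcb.symm]

theorem stmt1 {V : Type*} [Fintype V] (G : SimpleGraph V)
    (hG : G.Connected) (hn : 3 <= Fintype.card V) (f : V -> V) :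
    metricDim (functigraph G f) <= 2 * Fintype.card V - 3 := by
  classical
  have hcard : 2 * Fintype.card V = Fintype.card (V ⊕ V) := by
    rw [Fintype.card_sum]; ring
  rw [hcard]
  have third : ∀ p q : V, ∃ r, r ≠ p ∧ r ≠ q := by
    intro p q
    by_contra! h
    have : (Finset.univ : Finset V) ⊆ {p, q} := by
      intro x _
      by_cases hx : x = p
      · simp [hx]
      · simp [h x hx]
    have h1 := Finset.card_le_card this
    have h2 := Finset.card_le_two (a := p) (b := q)
    rw [Finset.card_univ] at h1
    omega
  haveI : Nontrivial V := Fintype.one_lt_card_iff_nontrivial.1 (by omega)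
  have nbr : ∀ p : V, ∃ r, G.Adj p r := fun p => hG.preconnected.exists_adj_of_nontrivial p
  by_cases hconst : ∀ a b, f a = f b
  · obtain ⟨a⟩ := hG.nonempty
    obtain ⟨a2, ha2⟩ := nbr a
    obtain ⟨r, hr⟩ := nbr (f a)
    obtain ⟨q, hqp, hqr⟩ := third (f a) r
    have h2 : f a2 = f a := hconst _ _
    refine dim_le _ (fg_conn G f hG) (Sum.inl a) (Sum.inr (f a)) (Sum.inr q)
      (by simp) (by simp) (by simpa using hqp.symm) ⟨Sum.inr r, ?_, ?_⟩ ⟨Sum.inl a2, ?_, ?_⟩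
      ⟨Sum.inl a2, ?_, ?_⟩
    · simp [hr.ne', hqr.symm]
    · simp [fg_lr, fg_rr, hr, hr.ne]
    · simp [ha2.ne']
    · simp [fg_ll, fg_rl, ha2, h2, hqp.symm]
    · simp [ha2.ne']
    · simp [fg_rl, h2, hqp.symm]
  · push Not at hconst
    obtain ⟨a, b, hab⟩ := hconst
    by_cases h1 : ∃ c, G.Adj (f a) c ∧ c ≠ f b
    · obtain ⟨c, hc, hcb⟩ := h1
      exact fg_two G hG f a b c hab hc hcb
    by_cases h2 : ∃ c, G.Adj (f b) c ∧ c ≠ f a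
    · obtain ⟨c, hc, hcb⟩ := h2
      exact fg_two G hG f b a c hab.symm hc hcb
    exfalso
    push Not at h1 h2
    obtain ⟨r, hr1, hr2⟩ := third (f a) (f b)
    have cl : ∀ x y, G.Walk x y → (x = f a ∨ x = f b) → (y = f a ∨ y = f b) := by
      intro x y w
      induction w with
      | nil => exact id
      | cons h _ ih =>
        rintro (rfl | rfl)
        · exact ih (Or.inr (h1 _ h))
        · exact ih (Or.inl (h2 _ h))
    obtain ⟨w⟩ := hG.preconnected (f a) r
    rcases cl _ _ w (Or.inl rfl) with h | h
    · exact hr1 h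
    · exact hr2 h
end

section
/- Let Pₙ be the path on n ≥ 3 vertices and let id : V(G₁) → V(G₂) be the identity function between two disjoint copies G₁, G₂ of Pₙ (matching corresponding vertices). Then dim(C(Pₙ, id)) = 2; moreover, the two end-vertices of G₁ form a minimum resolving set of C(Pₙ, id). -/
def ladderD {n : ℕ} : Fin n ⊕ Fin n → Fin n ⊕ Fin n → ℕ
  | Sum.inl a, Sum.inl b => (a.val - b.val) + (b.val - a.val)
  | Sum.inr a, Sum.inr b => (a.val - b.val) + (b.val - a.val)
  | Sum.inl a, Sum.inr b => (a.val - b.val) + (b.val - a.val) + 1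
  | Sum.inr a, Sum.inl b => (a.val - b.val) + (b.val - a.val) + 1

lemma ladder_adj {n : ℕ} (x y : Fin n ⊕ Fin n) :
    (functigraph (SimpleGraph.pathGraph n) id).Adj x y ↔ ladderD x y = 1 := by
  rcases x with a | a <;> rcases y with b | b <;>
    simp [functigraph, ladderD, SimpleGraph.pathGraph_adj, Fin.ext_iff] <;> omega

lemma ladder_tri {n : ℕ} (x y z : Fin n ⊕ Fin n) :
    ladderD x z ≤ ladderD x y + ladderD y z := by
  rcases x with a | a <;> rcases y with b | b <;> rcases z with c | c <;>
    simp only [ladderD] <;> omega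

lemma ladder_le {n : ℕ} {x y : Fin n ⊕ Fin n}
    (p : (functigraph (SimpleGraph.pathGraph n) id).Walk x y) : ladderD x y ≤ p.length := by
  induction p with
  | nil => rename_i u; rcases u with u | u <;> simp [ladderD]
  | cons h p ih =>
    rename_i u v w
    have h1 := (ladder_adj _ _).1 h
    have h2 := ladder_tri u v w
    rw [SimpleGraph.Walk.length_cons]
    omega

lemma ladder_step {n k : ℕ} (x y : Fin n ⊕ Fin n) (h : ladderD x y = k + 1) :
    ∃ z, ladderD x z = 1 ∧ ladderD z y = k := by
  have key : ∀ a b : Fin n, a.val ≠ b.val → ∃ c : Fin n,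
      (a.val - c.val) + (c.val - a.val) = 1 ∧
      (c.val - b.val) + (b.val - c.val) + 1 = (a.val - b.val) + (b.val - a.val) := by
    intro a b hab
    rcases lt_or_gt_of_ne hab with h | h
    · exact ⟨⟨a.val + 1, by omega⟩, by simp only []; omega, by simp only []; omega⟩
    · exact ⟨⟨a.val - 1, by omega⟩, by simp only []; omega, by simp only []; omega⟩
  rcases x with a | a <;> rcases y with b | b <;> simp only [ladderD] at h
  · obtain ⟨c, h1, h2⟩ := key a b (by omega)
    exact ⟨Sum.inl c, by simp only [ladderD]; omega, by simp only [ladderD]; omega⟩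
  · exact ⟨Sum.inr a, by simp only [ladderD]; omega, by simp only [ladderD]; omega⟩
  · exact ⟨Sum.inl a, by simp only [ladderD]; omega, by simp only [ladderD]; omega⟩
  · obtain ⟨c, h1, h2⟩ := key a b (by omega)
    exact ⟨Sum.inr c, by simp only [ladderD]; omega, by simp only [ladderD]; omega⟩

lemma ladder_walk {n : ℕ} (k : ℕ) : ∀ (x y : Fin n ⊕ Fin n), ladderD x y = k →
    ∃ p : (functigraph (SimpleGraph.pathGraph n) id).Walk x y, p.length = k := by
  induction k with
  | zero =>
    intro x y h
    have : x = y := by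
      rcases x with a | a <;> rcases y with b | b <;> simp only [ladderD] at h
      · congr 1; ext; omega
      · omega
      · omega
      · congr 1; ext; omega
    subst this
    exact ⟨SimpleGraph.Walk.nil, rfl⟩
  | succ k ih =>
    intro x y h
    obtain ⟨z, h1, h2⟩ := ladder_step x y h
    obtain ⟨p, hp⟩ := ih z y h2
    exact ⟨SimpleGraph.Walk.cons ((ladder_adj x z).2 h1) p, by simp [hp]⟩

lemma ladder_dist {n : ℕ} (x y : Fin n ⊕ Fin n) :
    (functigraph (SimpleGraph.pathGraph n) id).dist x y = ladderD x y := by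
  obtain ⟨p, hp⟩ := ladder_walk _ x y rfl
  apply le_antisymm
  · rw [← hp]; exact SimpleGraph.dist_le p
  · obtain ⟨q, hq⟩ := SimpleGraph.Reachable.exists_walk_length_eq_dist ⟨p⟩
    rw [← hq]; exact ladder_le q

lemma ladder_nbrs {n : ℕ} (hn : 3 ≤ n) (w : Fin n ⊕ Fin n) :
    ∃ x y, x ≠ y ∧ ladderD x w = 1 ∧ ladderD y w = 1 := by
  have key : ∀ a : Fin n, ∃ c : Fin n, (c.val - a.val) + (a.val - c.val) = 1 := by
    intro a
    by_cases h : a.val = 0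
    · exact ⟨⟨1, by omega⟩, by simp only []; omega⟩
    · exact ⟨⟨a.val - 1, by omega⟩, by simp only []; omega⟩
  rcases w with a | a <;> obtain ⟨c, hc⟩ := key a
  · exact ⟨Sum.inl c, Sum.inr a, by simp, hc, by simp [ladderD]⟩
  · exact ⟨Sum.inr c, Sum.inl a, by simp, hc, by simp [ladderD]⟩

theorem stmt2 (n : ℕ) (hn : 3 <= n) :
    metricDim (functigraph (SimpleGraph.pathGraph n) id) = 2 ∧
    IsResolving (functigraph (SimpleGraph.pathGraph n) id)
      {Sum.inl ⟨0, by omega⟩, Sum.inl ⟨n - 1, by omega⟩} ∧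
    ({Sum.inl ⟨0, by omega⟩, Sum.inl ⟨n - 1, by omega⟩} : Set (Fin n ⊕ Fin n)).ncard =
      metricDim (functigraph (SimpleGraph.pathGraph n) id) := by
  have hres : IsResolving (functigraph (SimpleGraph.pathGraph n) id)
      {Sum.inl ⟨0, by omega⟩, Sum.inl ⟨n - 1, by omega⟩} := by
    intro x y hxy
    by_contra hcon
    push Not at hcon
    have h1 := hcon _ (Set.mem_insert _ _)
    have h2 := hcon _ (Set.mem_insert_of_mem _ (Set.mem_singleton _))
    rw [ladder_dist, ladder_dist] at h1 h2
    apply hxy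
    rcases x with a | a <;> rcases y with b | b <;> simp only [ladderD] at h1 h2
    · congr 1; ext; omega
    · omega
    · omega
    · congr 1; ext; omega
  have hcard : ({Sum.inl ⟨0, by omega⟩, Sum.inl ⟨n - 1, by omega⟩} :
      Set (Fin n ⊕ Fin n)).ncard = 2 := by
    apply Set.ncard_pair
    simp only [ne_eq, Sum.inl.injEq, Fin.mk.injEq]
    omega
  have hdim : metricDim (functigraph (SimpleGraph.pathGraph n) id) = 2 := by
    apply le_antisymm
    · exact Nat.sInf_le ⟨_, hres, Set.toFinite _, hcard⟩
    · refine le_csInf ⟨2, _, hres, Set.toFinite _, hcard⟩ ?_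
      rintro k ⟨S, hS, hfin, rfl⟩
      by_contra hlt
      have hle : S.ncard ≤ 1 := by omega
      rw [Set.ncard_le_one hfin] at hle
      have hw : ∃ w, ∀ v ∈ S, v = w := by
        rcases S.eq_empty_or_nonempty with h | ⟨w, hw⟩
        · exact ⟨Sum.inl ⟨0, by omega⟩, by simp [h]⟩
        · exact ⟨w, fun v hv => hle v hv w hw⟩
      obtain ⟨w, hw⟩ := hw
      obtain ⟨x, y, hxy, hx, hy⟩ := ladder_nbrs hn w
      obtain ⟨v, hv, hne⟩ := hS x y hxy
      rw [hw v hv, ladder_dist, ladder_dist] at hne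
      omega
  exact ⟨hdim, hres, hcard.trans hdim.symm⟩
end

section
/- Let Kₙ be the complete graph of order n ≥ 3 and let σ : V(G₁) → V(G₂) be a bijection (permutation) between two disjoint copies G₁, G₂ of Kₙ. Then dim(C(Kₙ, σ)) = n − 1. -/
theorem fg_rr_s4 {n : ℕ} (σ : Fin n → Fin n) (a b : Fin n) (h : a ≠ b) :
    (functigraph (⊤ : SimpleGraph (Fin n)) σ).dist (Sum.inr a) (Sum.inr b) = 1 := by
  rw [SimpleGraph.dist_eq_one_iff_adj]
  simp [functigraph, h]

theorem fg_lr_adj {n : ℕ} (σ : Fin n → Fin n) (a b : Fin n) :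
    (functigraph (⊤ : SimpleGraph (Fin n)) σ).Adj (Sum.inl a) (Sum.inr b) ↔ σ a = b := by
  simp [functigraph]

theorem fg_lr_one {n : ℕ} (σ : Fin n → Fin n) (a b : Fin n) (h : σ a = b) :
    (functigraph (⊤ : SimpleGraph (Fin n)) σ).dist (Sum.inl a) (Sum.inr b) = 1 := by
  rw [SimpleGraph.dist_eq_one_iff_adj, fg_lr_adj]
  exact h

theorem fg_lr_two {n : ℕ} (σ : Fin n → Fin n) (a b : Fin n) (h : σ a ≠ b) :
    (functigraph (⊤ : SimpleGraph (Fin n)) σ).dist (Sum.inl a) (Sum.inr b) = 2 := by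
  have h1 : (functigraph (⊤ : SimpleGraph (Fin n)) σ).Adj (Sum.inl a) (Sum.inr (σ a)) :=
    (fg_lr_adj σ a _).2 rfl
  have h2 : (functigraph (⊤ : SimpleGraph (Fin n)) σ).Adj (Sum.inr (σ a)) (Sum.inr b) :=
    SimpleGraph.dist_eq_one_iff_adj.1 (fg_rr_s4 σ _ _ h)
  let w := SimpleGraph.Walk.cons h1 (SimpleGraph.Walk.cons h2 SimpleGraph.Walk.nil)
  have hle := SimpleGraph.dist_le w
  have hw : w.length = 2 := rfl
  have h0 : (functigraph (⊤ : SimpleGraph (Fin n)) σ).dist (Sum.inl a) (Sum.inr b) ≠ 0 := by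
    intro h0
    have := (w.reachable.dist_eq_zero_iff).1 h0
    simp at this
  have hne : (functigraph (⊤ : SimpleGraph (Fin n)) σ).dist (Sum.inl a) (Sum.inr b) ≠ 1 := by
    rw [Ne, SimpleGraph.dist_eq_one_iff_adj, fg_lr_adj]
    exact h
  omega

theorem fg_res {n : ℕ} (hn : 3 ≤ n) (σ : Fin n → Fin n) (hσ : Function.Bijective σ) (z : Fin n) :
    IsResolving (functigraph (⊤ : SimpleGraph (Fin n)) σ) (Sum.inr '' {z}ᶜ) := by
  have key : ∀ a b : Fin n, ∃ w, w ≠ z ∧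
      (functigraph (⊤ : SimpleGraph (Fin n)) σ).dist (Sum.inl a) (Sum.inr w) ≠
      (functigraph (⊤ : SimpleGraph (Fin n)) σ).dist (Sum.inr b) (Sum.inr w) := by
    intro a b
    by_cases hb : b ≠ z
    · refine ⟨b, hb, ?_⟩
      by_cases h : σ a = b
      · rw [fg_lr_one σ a b h]; simp
      · rw [fg_lr_two σ a b h]; simp
    · push Not at hb
      subst hb
      obtain ⟨w, hw⟩ : ∃ w, w ∉ ({b, σ a} : Finset (Fin n)) := by
        by_contra! hc
        have h1 := Finset.card_le_two (a := b) (b := σ a)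
        rw [Finset.eq_univ_iff_forall.2 hc, Finset.card_univ, Fintype.card_fin] at h1
        omega
      simp only [Finset.mem_insert, Finset.mem_singleton, not_or] at hw
      refine ⟨w, hw.1, ?_⟩
      rw [fg_lr_two σ a w (Ne.symm hw.2), fg_rr_s4 σ b w (Ne.symm hw.1)]
      simp
  intro x y hxy
  rcases x with a | a <;> rcases y with b | b
  · have hab : σ a ≠ σ b := fun h => hxy (by rw [hσ.1 h])
    by_cases h : σ a = z
    · refine ⟨_, ⟨σ b, fun h' => hab (h.trans h'.symm), rfl⟩, ?_⟩
      rw [fg_lr_two σ _ _ hab, fg_lr_one σ _ _ rfl]; simp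
    · refine ⟨_, ⟨σ a, h, rfl⟩, ?_⟩
      rw [fg_lr_two σ _ _ hab.symm, fg_lr_one σ _ _ rfl]; simp
  · obtain ⟨w, h1, h2⟩ := key a b
    exact ⟨_, ⟨w, h1, rfl⟩, h2⟩
  · obtain ⟨w, h1, h2⟩ := key b a
    exact ⟨_, ⟨w, h1, rfl⟩, h2.symm⟩
  · have hab : a ≠ b := fun h => hxy (by rw [h])
    by_cases h : a = z
    · refine ⟨_, ⟨b, fun h' => hab (h.trans h'.symm), rfl⟩, ?_⟩
      rw [fg_rr_s4 σ _ _ hab]; simp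
    · refine ⟨_, ⟨a, h, rfl⟩, ?_⟩
      rw [fg_rr_s4 σ _ _ hab.symm]; simp

theorem fg_lower {n : ℕ} (σ : Fin n → Fin n) (S : Set (Fin n ⊕ Fin n))
    (hS : IsResolving (functigraph (⊤ : SimpleGraph (Fin n)) σ) S) : n - 1 ≤ S.ncard := by
  let T : Set (Fin n) := Sum.elim σ id '' S
  have hT : T.ncard ≤ S.ncard := Set.ncard_image_le S.toFinite
  have hc : Tᶜ.ncard ≤ 1 := by
    rw [Set.ncard_le_one]
    intro c hc d hd
    by_contra hcd
    obtain ⟨w, hw, hne⟩ := hS (Sum.inr c) (Sum.inr d) (fun h => hcd (Sum.inr.inj h))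
    apply hne
    have h1 : Sum.elim σ id w ≠ c := fun h => hc ⟨w, hw, h⟩
    have h2 : Sum.elim σ id w ≠ d := fun h => hd ⟨w, hw, h⟩
    rcases w with a | a
    · rw [SimpleGraph.dist_comm, fg_lr_two σ a c h1, SimpleGraph.dist_comm, fg_lr_two σ a d h2]
    · rw [fg_rr_s4 σ c a (Ne.symm h1), fg_rr_s4 σ d a (Ne.symm h2)]
      
  have := Set.ncard_add_ncard_compl T
  rw [Nat.card_eq_fintype_card, Fintype.card_fin] at this
  omega

theorem stmt4 (n : ℕ) (hn : 3 <= n) (σ : Fin n -> Fin n)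
    (hσ : Function.Bijective σ) :
    metricDim (functigraph (⊤ : SimpleGraph (Fin n)) σ) = n - 1 := by
  apply IsLeast.csInf_eq
  constructor
  · refine ⟨_, fg_res hn σ hσ ⟨0, by omega⟩, Set.toFinite _, ?_⟩
    rw [Set.ncard_image_of_injective _ Sum.inr_injective]
    have := Set.ncard_add_ncard_compl ({⟨0, by omega⟩} : Set (Fin n))
    rw [Nat.card_eq_fintype_card, Fintype.card_fin, Set.ncard_singleton] at this
    omega
  · rintro k ⟨S, hS, -, rfl⟩
    exact fg_lower σ S hS
end

section
/- For m, n ≥ 3, let H₁ = Kₘ and H₂ = Kₙ be vertex-disjoint complete graphs, let v₁ be a fixed vertex of H₂, and let 𝒢 be the graph with vertex set V(H₁) ∪ V(H₂) and edge set E(H₁) ∪ E(H₂) ∪ {u v₁ : u ∈ V(H₁)} (i.e., every vertex of H₁ is joined to the single vertex v₁ of H₂). Then dim(𝒢) = m + n − 3. -/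
/-- Two complete graphs `K_m` and `K_n`, with every vertex of the first joined to
the single fixed vertex `v1` of the second. -/
def joinedCompletes (m n : ℕ) (v1 : Fin n) : SimpleGraph (Fin m ⊕ Fin n) :=
  SimpleGraph.fromRel (fun x y =>
    match x, y with
    | Sum.inl a, Sum.inl b => a ≠ b
    | Sum.inr a, Sum.inr b => a ≠ b
    | Sum.inl _, Sum.inr b => b = v1
    | Sum.inr _, Sum.inl _ => False)

def jcCls (m n : ℕ) (v1 : Fin n) : Fin m ⊕ Fin n → Fin 3
  | Sum.inl _ => 0
  | Sum.inr b => if b = v1 then 1 else 2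

lemma jc_adj (m n : ℕ) (v1 : Fin n) (x y : Fin m ⊕ Fin n) :
    (joinedCompletes m n v1).Adj x y ↔ x ≠ y ∧ ¬ (jcCls m n v1 x = 0 ∧ jcCls m n v1 y = 2)
      ∧ ¬ (jcCls m n v1 x = 2 ∧ jcCls m n v1 y = 0) := by
  rcases x with a | a <;> rcases y with b | b <;>
    simp only [joinedCompletes, SimpleGraph.fromRel_adj, jcCls]
  · simp; grind
  · by_cases h : b = v1 <;> simp [h]
  · by_cases h : a = v1 <;> simp [h]
  · by_cases h : a = v1 <;> by_cases h' : b = v1 <;> simp [h, h'] <;> grind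

lemma jc_dist (m n : ℕ) (v1 : Fin n) (x y : Fin m ⊕ Fin n) :
    (joinedCompletes m n v1).dist x y = if x = y then 0 else
      if (jcCls m n v1 x = 0 ∧ jcCls m n v1 y = 2) ∨ (jcCls m n v1 x = 2 ∧ jcCls m n v1 y = 0)
      then 2 else 1 := by
  split_ifs with h1 h2
  · subst h1; simp
  · have hc : jcCls m n v1 (Sum.inr v1) = 1 := by simp [jcCls]
    have hxv : (joinedCompletes m n v1).Adj x (Sum.inr v1) := by
      rw [jc_adj, hc]
      refine ⟨?_, by simp, by simp⟩
      rintro rfl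
      simp [hc] at h2
    have hvy : (joinedCompletes m n v1).Adj (Sum.inr v1) y := by
      rw [jc_adj, hc]
      refine ⟨?_, by simp, by simp⟩
      rintro rfl
      simp [hc] at h2
    have hle := SimpleGraph.dist_le (SimpleGraph.Walk.cons hxv (SimpleGraph.Walk.cons hvy .nil))
    simp at hle
    have hr : (joinedCompletes m n v1).Reachable x y := hxv.reachable.trans hvy.reachable
    have h0 : (joinedCompletes m n v1).dist x y ≠ 0 := by
      rw [Ne, hr.dist_eq_zero_iff]; exact h1
    have h3 : (joinedCompletes m n v1).dist x y ≠ 1 := by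
      rw [Ne, SimpleGraph.dist_eq_one_iff_adj, jc_adj]; tauto
    omega
  · rw [SimpleGraph.dist_eq_one_iff_adj, jc_adj]; tauto

theorem stmt6 (m n : ℕ) (hm : 3 <= m) (hn : 3 <= n) (v1 : Fin n) :
    metricDim (joinedCompletes m n v1) = m + n - 3 := by
  have hlow : ∀ S : Set (Fin m ⊕ Fin n), IsResolving (joinedCompletes m n v1) S →
      m + n - 3 ≤ S.ncard := by
    intro S hS
    have hinj : Set.InjOn (jcCls m n v1) Sᶜ := by
      intro x hx y hy hxy
      by_contra hne
      obtain ⟨w, hw, hd⟩ := hS x y hne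
      apply hd
      have h1 : x ≠ w := by rintro rfl; exact hx hw
      have h2 : y ≠ w := by rintro rfl; exact hy hw
      rw [jc_dist, jc_dist, if_neg h1, if_neg h2, hxy]
    have h1 := Set.ncard_le_ncard_of_injOn (t := Set.univ) (jcCls m n v1)
      (fun _ _ => Set.mem_univ _) hinj
    have h2 := Set.ncard_add_ncard_compl S
    simp [Set.ncard_univ] at h1 h2
    omega
  have : Nontrivial (Fin n) := Fin.nontrivial_iff_two_le.2 (by omega)
  obtain ⟨b0, hb0⟩ := exists_ne v1
  obtain ⟨b1, hb1, hb1'⟩ : ∃ b1 : Fin n, b1 ≠ v1 ∧ b1 ≠ b0 := by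
    have : ∃ b1, b1 ∉ ({v1, b0} : Finset (Fin n)) := by
      by_contra! h
      have h1 := Finset.card_le_card (fun x _ => h x : (Finset.univ : Finset (Fin n)) ⊆ _)
      have h2 := Finset.card_le_two (a := v1) (b := b0)
      simp only [Finset.card_univ, Fintype.card_fin] at h1
      omega
    simpa using this
  let a0 : Fin m := ⟨0, by omega⟩
  let a1 : Fin m := ⟨1, by omega⟩
  have ha : a1 ≠ a0 := by simp [a0, a1]
  let T : Set (Fin m ⊕ Fin n) := {Sum.inl a0, Sum.inr v1, Sum.inr b0}
  have hT : T.ncard = 3 := by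
    rw [Set.ncard_eq_three]
    exact ⟨_, _, _, by simp, by simp, by simpa using hb0.symm, rfl⟩
  have hres : IsResolving (joinedCompletes m n v1) Tᶜ := by
    intro x y hne
    by_cases hx : x ∈ T
    · by_cases hy : y ∈ T
      · have hA : Sum.inl a1 ∈ Tᶜ := by simp [T, ha]
        have hB : Sum.inr b1 ∈ Tᶜ := by simp [T, hb1, hb1']
        simp only [T, Set.mem_insert_iff, Set.mem_singleton_iff] at hx hy
        rcases hx with rfl | rfl | rfl <;> rcases hy with rfl | rfl | rfl <;>
          first
          | exact absurd rfl hne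
          | (refine ⟨_, hA, ?_⟩; simp [jc_dist, jcCls, hb0, ha.symm]; done)
          | (refine ⟨_, hB, ?_⟩; simp [jc_dist, jcCls, hb0, hb1, hb1.symm, hb1'.symm]; done)
      · refine ⟨y, hy, ?_⟩
        rw [jc_dist, jc_dist]; grind
    · refine ⟨x, hx, ?_⟩
      rw [jc_dist, jc_dist]; grind
  have hcard : Tᶜ.ncard = m + n - 3 := by
    have h2 := Set.ncard_add_ncard_compl T
    simp at h2
    omega
  apply le_antisymm
  · exact Nat.sInf_le ⟨Tᶜ, hres, Set.toFinite _, hcard⟩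
  · refine le_csInf ⟨Tᶜ.ncard, Tᶜ, hres, Set.toFinite _, rfl⟩ ?_
    rintro k ⟨S, hS, -, rfl⟩
    exact hlow S hS
end

section
/- Let Cₙ be the cycle of order n ≥ 6 with two disjoint copies G₁ (vertices u₁,…,uₙ) and G₂ (vertices v₁,…,vₙ), and let f₀ : V(G₁) → V(G₂) be the constant function f₀(uᵢ) = v₁ for all i. If S is a minimum resolving set of C(Cₙ, f₀), then there is at most one vertex u of G₁ with u ∉ N[S], where N[S] denotes the closed neighborhood of S in C(Cₙ, f₀). -/
theorem fg_adj_lr {n : ℕ} (a : ZMod n) :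
    (functigraph (cycGraph n) (fun _ => (0 : ZMod n))).Adj (Sum.inl a) (Sum.inr 0) := by
  simp [functigraph, SimpleGraph.fromRel_adj]

theorem fg_adj_lr_eq {n : ℕ} (a c : ZMod n)
    (h : (functigraph (cycGraph n) (fun _ => (0 : ZMod n))).Adj (Sum.inl a) (Sum.inr c)) :
    c = 0 := by
  simp [functigraph, SimpleGraph.fromRel_adj] at h
  exact h.symm

theorem fg_walk {n : ℕ} (x y : ZMod n ⊕ ZMod n)
    (p : (functigraph (cycGraph n) (fun _ => (0 : ZMod n))).Walk x y) :
    ∀ a v b : ZMod n, x = Sum.inl a → y = Sum.inr v →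
      ∃ q : (functigraph (cycGraph n) (fun _ => (0 : ZMod n))).Walk (Sum.inl b) y,
        q.length ≤ p.length := by
  induction p with
  | nil => intro a v b h1 h2; simp [h1] at h2
  | @cons x z y h p ih =>
    intro a v b h1 h2
    subst h1
    rcases z with c | c
    · obtain ⟨q, hq⟩ := ih c v b rfl h2
      exact ⟨q, by simp; omega⟩
    · obtain rfl := fg_adj_lr_eq _ _ h
      exact ⟨SimpleGraph.Walk.cons (fg_adj_lr b) p, by simp⟩

theorem fg_edist {n : ℕ} (a b v : ZMod n) :
    (functigraph (cycGraph n) (fun _ => (0 : ZMod n))).edist (Sum.inl b) (Sum.inr v) ≤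
    (functigraph (cycGraph n) (fun _ => (0 : ZMod n))).edist (Sum.inl a) (Sum.inr v) := by
  refine le_iInf fun p => ?_
  obtain ⟨q, hq⟩ := fg_walk _ _ p a v b rfl rfl
  exact (SimpleGraph.edist_le q).trans (by exact_mod_cast hq)

theorem fg_dist_two {n : ℕ} (a b : ZMod n) (hne : (Sum.inl a : ZMod n ⊕ ZMod n) ≠ Sum.inl b)
    (hadj : ¬ (functigraph (cycGraph n) (fun _ => (0 : ZMod n))).Adj (Sum.inl a) (Sum.inl b)) :
    (functigraph (cycGraph n) (fun _ => (0 : ZMod n))).dist (Sum.inl a) (Sum.inl b) = 2 := by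
  set p : (functigraph (cycGraph n) (fun _ => (0 : ZMod n))).Walk (Sum.inl a) (Sum.inl b) :=
    .cons (fg_adj_lr a) (.cons (fg_adj_lr b).symm .nil) with hp
  have h2 := SimpleGraph.dist_le p
  have h0 := p.reachable.pos_dist_of_ne hne
  have h1 := mt SimpleGraph.dist_eq_one_iff_adj.1 hadj
  simp [hp] at h2
  omega

theorem stmt9 (n : ℕ) (hn : 6 <= n) (S : Set (ZMod n ⊕ ZMod n))
    (hres : IsResolving (functigraph (cycGraph n) (fun _ => (0 : ZMod n))) S)
    (hfin : S.Finite)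
    (hmin : S.ncard = metricDim (functigraph (cycGraph n) (fun _ => (0 : ZMod n)))) :
    {u : ZMod n |
      Sum.inl u ∉ closedNbhd (functigraph (cycGraph n) (fun _ => (0 : ZMod n))) S}.Subsingleton := by
  intro a ha b hb
  by_contra hab
  simp only [Set.mem_setOf_eq, closedNbhd, Set.mem_union, not_or, not_exists, not_and] at ha hb
  obtain ⟨w, hw, hd⟩ := hres (Sum.inl a) (Sum.inl b) (by simpa using hab)
  apply hd
  rcases w with s | v
  · rw [fg_dist_two a s (fun h => ha.1 (h ▸ hw)) (ha.2 _ hw),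
      fg_dist_two b s (fun h => hb.1 (h ▸ hw)) (hb.2 _ hw)]
  · unfold SimpleGraph.dist
    rw [le_antisymm (fg_edist b a v) (fg_edist a b v)]
end

section
/- Let Cₙ be an even cycle of order n ≥ 6 with two disjoint copies G₁ (vertices u₁,…,uₙ) and G₂ (vertices v₁,…,vₙ), and let f₀ : V(G₁) → V(G₂) be the constant function f₀(uᵢ) = v₁ for all i. If S is a minimum resolving set of C(Cₙ, f₀) and exactly one vertex of G₁ lies outside the closed neighborhood N[S] (taken in C(Cₙ, f₀)), then S contains at least two vertices of G₂. -/
theorem dist_eq_of_pot {V : Type*} (H : SimpleGraph V) (w : V) (g : V → ℕ)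
    (h0 : g w = 0) (hz : ∀ x, g x = 0 → x = w)
    (hl : ∀ x y, H.Adj x y → g x ≤ g y + 1)
    (hd : ∀ x m, g x = m + 1 → ∃ y, H.Adj x y ∧ g y = m) (x : V) :
    H.dist x w = g x := by
  have hw : ∀ m x, g x = m → ∃ p : H.Walk x w, p.length = m := by
    intro m
    induction m with
    | zero => intro x hx; obtain rfl := hz x hx; exact ⟨SimpleGraph.Walk.nil, rfl⟩
    | succ m ih =>
      intro x hx
      obtain ⟨y, hxy, hy⟩ := hd x m hx
      obtain ⟨p, hp⟩ := ih y hy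
      exact ⟨SimpleGraph.Walk.cons hxy p, by simp [hp]⟩
  have hlow : ∀ {x y : V} (p : H.Walk x y), g x ≤ g y + p.length := by
    intro x y p
    induction p with
    | nil => simp
    | cons h p ih =>
      have := hl _ _ h
      simp only [SimpleGraph.Walk.length_cons]
      omega
  obtain ⟨p, hp⟩ := hw _ x rfl
  apply le_antisymm
  · rw [← hp]; exact SimpleGraph.dist_le p
  · obtain ⟨q, hq⟩ := SimpleGraph.Reachable.exists_walk_length_eq_dist ⟨p⟩
    have := hlow q
    omega

theorem dist_eq_two_aux {V : Type*} (H : SimpleGraph V) (x y z : V) (hne : x ≠ y)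
    (hna : ¬ H.Adj x y) (h1 : H.Adj x z) (h2 : H.Adj z y) : H.dist x y = 2 := by
  let p : H.Walk x y := SimpleGraph.Walk.cons h1 (SimpleGraph.Walk.cons h2 SimpleGraph.Walk.nil)
  have hp : H.dist x y ≤ 2 := SimpleGraph.dist_le p
  have hr : H.Reachable x y := ⟨p⟩
  have h0 : H.dist x y ≠ 0 := fun h => hne (hr.dist_eq_zero_iff.1 h)
  have h3 : H.dist x y ≠ 1 := fun h => hna (SimpleGraph.dist_eq_one_iff_adj.1 h)
  omega

theorem val_succ_aux (n : ℕ) (hn : 6 ≤ n) (x : ZMod n) :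
    x.val < n ∧ (x + 1).val < n ∧
    ((x + 1).val = x.val + 1 ∨ (x.val + 1 = n ∧ (x + 1).val = 0)) := by
  have : NeZero n := ⟨by omega⟩
  have : Fact (1 < n) := ⟨by omega⟩
  have hx := ZMod.val_lt x
  refine ⟨hx, ZMod.val_lt _, ?_⟩
  rw [ZMod.val_add, ZMod.val_one]
  rcases Nat.lt_or_ge (x.val + 1) n with h | h
  · left; exact Nat.mod_eq_of_lt h
  · right
    have : x.val + 1 = n := by omega
    exact ⟨this, by rw [this]; simp⟩

def cd (n : ℕ) (x : ZMod n) : ℕ := min x.val (n - x.val)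

def pot (n : ℕ) (k : ZMod n) : ZMod n ⊕ ZMod n → ℕ
  | Sum.inl _ => cd n (0 - k) + 1
  | Sum.inr j => cd n (j - k)

theorem cd_lip (n : ℕ) (hn : 6 ≤ n) (x : ZMod n) :
    cd n x ≤ cd n (x+1) + 1 ∧ cd n (x+1) ≤ cd n x + 1 := by
  have := val_succ_aux n hn x
  unfold cd; omega

theorem cd_zero (n : ℕ) (hn : 6 ≤ n) (x : ZMod n) (h : cd n x = 0) : x = 0 := by
  have : NeZero n := ⟨by omega⟩
  have := ZMod.val_lt x
  rw [← ZMod.val_eq_zero]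
  unfold cd at h; omega

theorem cd_desc (n : ℕ) (hn : 6 ≤ n) (x : ZMod n) (m : ℕ) (h : cd n x = m + 1) :
    cd n (x + 1) = m ∨ cd n (x - 1) = m := by
  have h1 := val_succ_aux n hn x
  have h2 := val_succ_aux n hn (x - 1)
  rw [sub_add_cancel] at h2
  unfold cd at *; omega

theorem cd_key (n : ℕ) (hn : 6 ≤ n) (hev : Even n) (x : ZMod n) :
    cd n (x + 1) = cd n (x - 1) ∨ cd n (x + 1) = cd n x + 1 ∨ cd n (x - 1) = cd n x + 1 := by
  have h1 := val_succ_aux n hn x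
  have h2 := val_succ_aux n hn (x - 1)
  rw [sub_add_cancel] at h2
  obtain ⟨r, hr⟩ := hev
  unfold cd at *; omega

theorem one_ne_zero_aux (n : ℕ) (hn : 6 ≤ n) : (1 : ZMod n) ≠ 0 := by
  have : Fact (1 < n) := ⟨by omega⟩
  exact one_ne_zero

theorem adj_inl_zero (n : ℕ) (i : ZMod n) :
    (functigraph (cycGraph n) (fun _ => (0 : ZMod n))).Adj (Sum.inl i) (Sum.inr 0) := by
  simp [functigraph]

theorem adj_inl_inr (n : ℕ) (i j : ZMod n) :
    (functigraph (cycGraph n) (fun _ => (0 : ZMod n))).Adj (Sum.inl i) (Sum.inr j) ↔ 0 = j := by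
  simp [functigraph]

theorem adj_inr_inr (n : ℕ) (hn : 6 ≤ n) (i j : ZMod n) :
    (functigraph (cycGraph n) (fun _ => (0 : ZMod n))).Adj (Sum.inr i) (Sum.inr j) ↔
      (j = i + 1 ∨ i = j + 1) := by
  have h1 := one_ne_zero_aux n hn
  simp only [functigraph, cycGraph, SimpleGraph.fromRel_adj]
  constructor
  · rintro ⟨_, ⟨_, h⟩ | ⟨_, h⟩⟩
    · exact h
    · exact h.symm
  · intro h
    have : i ≠ j := by
      rintro rfl
      simp [h1] at h
    exact ⟨by simpa using this, Or.inl ⟨this, h⟩⟩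

theorem dist_pot (n : ℕ) (hn : 6 ≤ n) (k : ZMod n) (x : ZMod n ⊕ ZMod n) :
    (functigraph (cycGraph n) (fun _ => (0 : ZMod n))).dist x (Sum.inr k) = pot n k x := by
  apply dist_eq_of_pot
  · simp [pot, cd]
  · rintro (x | x) h
    · simp [pot] at h
    · have := cd_zero n hn _ h
      rw [sub_eq_zero.1 this]
  · rintro (x | x) (y | y) h
    · simp [pot]
    · rw [adj_inl_inr] at h
      subst h
      simp [pot]
    · rw [SimpleGraph.adj_comm, adj_inl_inr] at h
      subst h
      simp only [pot]; omega
    · rw [adj_inr_inr n hn] at h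
      simp only [pot]
      rcases h with rfl | rfl
      · have := cd_lip n hn (x - k)
        rw [show x + 1 - k = x - k + 1 by ring]
        omega
      · have := cd_lip n hn (y - k)
        rw [show y + 1 - k = y - k + 1 by ring]
        omega
  · rintro (x | x) m h
    · exact ⟨Sum.inr 0, adj_inl_zero n x, by simpa [pot] using h⟩
    · rcases cd_desc n hn (x - k) m h with h | h
      · refine ⟨Sum.inr (x + 1), (adj_inr_inr n hn _ _).2 (Or.inl rfl), ?_⟩
        simp only [pot]
        rw [show x + 1 - k = x - k + 1 by ring, h]
      · refine ⟨Sum.inr (x - 1), (adj_inr_inr n hn _ _).2 (Or.inr (by ring)), ?_⟩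
        simp only [pot]
        rw [show x - 1 - k = x - k - 1 by ring, h]

theorem dist_two_inr (n : ℕ) (hn : 6 ≤ n) (j i : ZMod n) (hj : j = 1 ∨ j = -1) :
    (functigraph (cycGraph n) (fun _ => (0 : ZMod n))).dist (Sum.inr j) (Sum.inl i) = 2 := by
  have h1 := one_ne_zero_aux n hn
  apply dist_eq_two_aux _ _ _ (Sum.inr 0) (by simp)
  · rw [SimpleGraph.adj_comm, adj_inl_inr]
    rcases hj with rfl | rfl
    · exact h1.symm
    · exact fun h => h1 (by simpa using h.symm)
  · rw [adj_inr_inr n hn]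
    rcases hj with rfl | rfl
    · right; simp
    · left; simp
  · exact (adj_inl_zero n i).symm

theorem stmt10 (n : ℕ) (hn : 6 <= n) (hev : Even n) (S : Set (ZMod n ⊕ ZMod n))
    (hres : IsResolving (functigraph (cycGraph n) (fun _ => (0 : ZMod n))) S)
    (hfin : S.Finite)
    (hmin : S.ncard = metricDim (functigraph (cycGraph n) (fun _ => (0 : ZMod n))))
    (hone : {u : ZMod n |
      Sum.inl u ∉ closedNbhd (functigraph (cycGraph n) (fun _ => (0 : ZMod n))) S}.ncard = 1) :
    2 <= {v : ZMod n | Sum.inr v ∈ S}.ncard := by 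
  have : NeZero n := ⟨by omega⟩
  by_contra hlt
  have hle : {v : ZMod n | Sum.inr v ∈ S}.ncard ≤ 1 := by omega
  obtain ⟨k, hk⟩ := (Set.ncard_le_one_iff_subset_singleton (Set.toFinite _)).1 hle
  obtain ⟨u, hu⟩ := Set.ncard_eq_one.1 hone
  have hu' : Sum.inl u ∉
      closedNbhd (functigraph (cycGraph n) (fun _ => (0 : ZMod n))) S := by
    have : u ∈ ({u} : Set (ZMod n)) := rfl
    rw [← hu] at this
    exact this
  have hu2 : ∀ i, Sum.inl i ∈ S →
      (functigraph (cycGraph n) (fun _ => (0 : ZMod n))).dist (Sum.inl u) (Sum.inl i) = 2 := by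
    intro i hi
    apply dist_eq_two_aux _ _ _ (Sum.inr 0)
    · intro h
      exact hu' (Or.inl (h ▸ hi))
    · intro h
      exact hu' (Or.inr ⟨_, hi, h⟩)
    · exact adj_inl_zero n u
    · exact (adj_inl_zero n i).symm
  have hne : (1 : ZMod n) ≠ -1 := by
    intro h
    have h1 := val_succ_aux n hn (-1)
    have h2 := val_succ_aux n hn 0
    simp only [neg_add_cancel, zero_add, ZMod.val_zero] at h1 h2
    rw [← h] at h1
    omega
  have key : ∀ x y : ZMod n ⊕ ZMod n, x ≠ y → pot n k x = pot n k y →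
      (∀ i, Sum.inl i ∈ S →
        (functigraph (cycGraph n) (fun _ => (0 : ZMod n))).dist x (Sum.inl i) = 2) →
      (∀ i, Sum.inl i ∈ S →
        (functigraph (cycGraph n) (fun _ => (0 : ZMod n))).dist y (Sum.inl i) = 2) → False := by
    intro x y hxy hp hx hy
    obtain ⟨w, hw, hd⟩ := hres x y hxy
    rcases w with i | j
    · exact hd (by rw [hx i hw, hy i hw])
    · have hj : j = k := hk hw
      subst hj
      exact hd (by rw [dist_pot n hn, dist_pot n hn, hp])
  have e1 : (1 : ZMod n) - k = 0 - k + 1 := by ring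
  have e2 : (-1 : ZMod n) - k = 0 - k - 1 := by ring
  rcases cd_key n hn hev (0 - k) with h | h | h
  · exact key (Sum.inr 1) (Sum.inr (-1)) (by simpa using hne)
      (by simp only [pot]; rw [e1, e2, h])
      (fun i _ => dist_two_inr n hn 1 i (Or.inl rfl))
      (fun i _ => dist_two_inr n hn (-1) i (Or.inr rfl))
  · exact key (Sum.inr 1) (Sum.inl u) (by simp)
      (by simp only [pot]; rw [e1, h])
      (fun i _ => dist_two_inr n hn 1 i (Or.inl rfl)) hu2
  · exact key (Sum.inr (-1)) (Sum.inl u) (by simp)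
      (by simp only [pot]; rw [e2, h])
      (fun i _ => dist_two_inr n hn (-1) i (Or.inr rfl)) hu2
end

section
/- Let Cₙ be the cycle of order n ≥ 6 with two disjoint copies G₁ (vertices u₁,…,uₙ) and G₂ (vertices v₁,…,vₙ), and let f₀ : V(G₁) → V(G₂) be the constant function f₀(uᵢ) = v₁ for all i. Let S be a minimum resolving set of C(Cₙ, f₀) and list S ∩ V(G₁) in cyclic order around G₁ as u_{i₁}, u_{i₂}, …, u_{i_t}. If two cyclically consecutive vertices u_{i_j}, u_{i_{j+1}} of S ∩ V(G₁) satisfy d_{G₁}(u_{i_j}, u_{i_{j+1}}) = 3 (with no vertex of S ∩ V(G₁) strictly between them), then the cyclic gap from u_{i_{j-1}} to u_{i_j} is at most 2 and the cyclic gap from u_{i_{j+1}} to u_{i_{j+2}} is at most 2 (i.e., d_{G₁}(u_{i_j}, u_{i_{j-1}}) ≤ 2 and d_{G₁}(u_{i_{j+2}}, u_{i_{j+1}}) ≤ 2). -/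
theorem aux_adj (n : ℕ) (x y : ZMod n ⊕ ZMod n) :
    (functigraph (cycGraph n) (fun _ => (0 : ZMod n))).Adj x y ↔ x ≠ y ∧
      match x, y with
      | Sum.inl a, Sum.inl b => b = a + 1 ∨ a = b + 1
      | Sum.inr a, Sum.inr b => b = a + 1 ∨ a = b + 1
      | Sum.inl _, Sum.inr b => b = 0
      | Sum.inr a, Sum.inl _ => a = 0 := by
  rcases x with x | x <;> rcases y with y | y <;>
    simp [functigraph, cycGraph, SimpleGraph.fromRel_adj] <;> grind

theorem aux_dist_le (n : ℕ) (b : ZMod n) (x y : ZMod n ⊕ ZMod n)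
    (hc : (functigraph (cycGraph n) (fun _ => (0 : ZMod n))).Reachable x y) :
    (functigraph (cycGraph n) (fun _ => (0 : ZMod n))).dist
      (Sum.map (fun t => 2 * b - t) id x) (Sum.map (fun t => 2 * b - t) id y) ≤
    (functigraph (cycGraph n) (fun _ => (0 : ZMod n))).dist x y := by
  obtain ⟨p, hp⟩ := hc.exists_walk_length_eq_dist
  let φ : functigraph (cycGraph n) (fun _ => (0 : ZMod n)) →g
      functigraph (cycGraph n) (fun _ => (0 : ZMod n)) :=
    { toFun := Sum.map (fun t => 2 * b - t) id
      map_rel' := by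
        intro x y h
        rw [aux_adj] at h ⊢
        rcases x with x | x <;> rcases y with y | y <;> simp at h ⊢ <;> grind }
  have := SimpleGraph.dist_le (p.map φ)
  rw [SimpleGraph.Walk.length_map, hp] at this
  exact this

theorem aux_conn (n : ℕ) (hn : 6 ≤ n) (x y : ZMod n ⊕ ZMod n) :
    (functigraph (cycGraph n) (fun _ => (0 : ZMod n))).Reachable x y := by
  have : NeZero n := ⟨by omega⟩
  have : Fact (1 < n) := ⟨by omega⟩
  suffices h : ∀ x, (functigraph (cycGraph n) (fun _ => (0 : ZMod n))).Reachable x (Sum.inr 0) from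
    (h x).trans (h y).symm
  rintro (x | x)
  · exact SimpleGraph.Adj.reachable ((aux_adj _ _ _).2 (by simp))
  · have h : ∀ k : ℕ, (functigraph (cycGraph n) (fun _ => (0 : ZMod n))).Reachable
        (Sum.inr (k : ZMod n)) (Sum.inr 0) := by
      intro k
      induction k with
      | zero => simp
      | succ k ih =>
        refine SimpleGraph.Reachable.trans (SimpleGraph.Adj.reachable ((aux_adj _ _ _).2 ?_)) ih
        simp
    simpa using h x.val

theorem aux_two (n : ℕ) (x c : ZMod n) (h0 : x ≠ c) (h1 : c ≠ x + 1) (h2 : x ≠ c + 1) :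
    (functigraph (cycGraph n) (fun _ => (0 : ZMod n))).dist (Sum.inl x) (Sum.inl c) = 2 := by
  have e1 : (functigraph (cycGraph n) (fun _ => (0 : ZMod n))).Adj (Sum.inl x) (Sum.inr 0) :=
    (aux_adj _ _ _).2 (by simp)
  have e2 : (functigraph (cycGraph n) (fun _ => (0 : ZMod n))).Adj (Sum.inr 0) (Sum.inl c) :=
    (aux_adj _ _ _).2 (by simp)
  have hle := SimpleGraph.dist_le (SimpleGraph.Walk.cons e1 (SimpleGraph.Walk.cons e2 .nil))
  simp only [SimpleGraph.Walk.length_cons, SimpleGraph.Walk.length_nil] at hle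
  have hr : (functigraph (cycGraph n) (fun _ => (0 : ZMod n))).Reachable (Sum.inl x) (Sum.inl c) :=
    e1.reachable.trans e2.reachable
  have hz := hr.pos_dist_of_ne (by simpa using h0)
  have hone : (functigraph (cycGraph n) (fun _ => (0 : ZMod n))).dist (Sum.inl x) (Sum.inl c) ≠ 1 := by
    rw [Ne, SimpleGraph.dist_eq_one_iff_adj, aux_adj]
    simp [h1, h2]
  omega

theorem aux_main (n : ℕ) (hn : 6 ≤ n) (S : Set (ZMod n ⊕ ZMod n))
    (hres : IsResolving (functigraph (cycGraph n) (fun _ => (0 : ZMod n))) S) (b : ZMod n)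
    (h1 : Sum.inl (b + 1) ∉ S) (h2 : Sum.inl (b + 2) ∉ S)
    (h3 : Sum.inl (b - 1) ∉ S) (h4 : Sum.inl (b - 2) ∉ S) : False := by
  have h20 : (2 : ZMod n) ≠ 0 := by
    intro h
    have h' : ((2 : ℕ) : ZMod n) = 0 := by exact_mod_cast h
    rw [ZMod.natCast_eq_zero_iff] at h'
    have := Nat.le_of_dvd (by norm_num) h'
    omega
  obtain ⟨w, hw, hd⟩ := hres (Sum.inl (b - 1)) (Sum.inl (b + 1)) (by
    intro h
    have h := Sum.inl.inj h
    apply h20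
    linear_combination -h)
  apply hd
  have key : ∀ w, Sum.map (fun t => 2 * b - t) id w = w →
      (functigraph (cycGraph n) (fun _ => (0 : ZMod n))).dist (Sum.inl (b - 1)) w =
      (functigraph (cycGraph n) (fun _ => (0 : ZMod n))).dist (Sum.inl (b + 1)) w := by
    intro w hw
    have k1 := aux_dist_le n b (Sum.inl (b - 1)) w (aux_conn n hn _ _)
    have k2 := aux_dist_le n b (Sum.inl (b + 1)) w (aux_conn n hn _ _)
    rw [hw, Sum.map_inl] at k1 k2
    rw [show 2 * b - (b - 1) = b + 1 by ring] at k1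
    rw [show 2 * b - (b + 1) = b - 1 by ring] at k2
    exact le_antisymm k2 k1
  rcases w with c | c
  · by_cases hcb : c = b
    · subst hcb
      apply key
      simp [two_mul]
    · rw [aux_two, aux_two]
      · rintro rfl; exact h1 hw
      · rintro rfl; exact h2 (by convert hw using 2; ring)
      · intro h; exact hcb (by linear_combination -h)
      · rintro rfl; exact h3 hw
      · rintro rfl; exact hcb (by ring)
      · intro h
        exact h4 (by convert hw using 2; linear_combination h)
  · exact key _ rfl

theorem stmt11 (n : ℕ) (hn : 6 <= n) (S : Set (ZMod n ⊕ ZMod n))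
    (hres : IsResolving (functigraph (cycGraph n) (fun _ => (0 : ZMod n))) S)
    (hfin : S.Finite)
    (hmin : S.ncard = metricDim (functigraph (cycGraph n) (fun _ => (0 : ZMod n))))
    (a : ZMod n) (ha : Sum.inl a ∈ S) (hb : Sum.inl (a + 3) ∈ S)
    (h1 : Sum.inl (a + 1) ∉ S) (h2 : Sum.inl (a + 2) ∉ S) :
    (Sum.inl (a - 1) ∈ S ∨ Sum.inl (a - 2) ∈ S) ∧
    (Sum.inl (a + 3 + 1) ∈ S ∨ Sum.inl (a + 3 + 2) ∈ S) := by
  constructor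
  · by_contra h
    rw [not_or] at h
    exact aux_main n hn S hres a h1 h2 h.1 h.2
  · by_contra h
    rw [not_or] at h
    refine aux_main n hn S hres (a + 3) h.1 h.2 ?_ ?_
    · rwa [show a + 3 - 1 = a + 2 by ring]
    · rwa [show a + 3 - 2 = a + 1 by ring]
end

section
/- Let Cₙ be the cycle of order n with 3 ≤ n ≤ 5, and let f₀ : V(G₁) → V(G₂) be a constant function between two disjoint copies G₁, G₂ of Cₙ. Then dim(C(Cₙ, f₀)) = 3. -/
def cyD (n : ℕ) (a b : ZMod n) : ℕ := min (a - b).val (b - a).val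

def fgD (n : ℕ) (c : ZMod n) : ZMod n ⊕ ZMod n → ZMod n ⊕ ZMod n → ℕ
  | Sum.inl a, Sum.inl b => min (cyD n a b) 2
  | Sum.inr a, Sum.inr b => cyD n a b
  | Sum.inl _, Sum.inr b => 1 + cyD n c b
  | Sum.inr b, Sum.inl _ => 1 + cyD n c b

def fgA (n : ℕ) (c : ZMod n) : ZMod n ⊕ ZMod n → ZMod n ⊕ ZMod n → Bool
  | Sum.inl a, Sum.inl b => a ≠ b ∧ (b = a + 1 ∨ a = b + 1)
  | Sum.inr a, Sum.inr b => a ≠ b ∧ (b = a + 1 ∨ a = b + 1)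
  | Sum.inl _, Sum.inr b => c = b
  | Sum.inr b, Sum.inl _ => c = b

lemma fgA_iff (n : ℕ) (c : ZMod n) (x y : ZMod n ⊕ ZMod n) :
    (functigraph (cycGraph n) (fun _ => c)).Adj x y ↔ fgA n c x y = true := by
  rcases x with x | x <;> rcases y with y | y <;>
    simp [functigraph, cycGraph, fgA, SimpleGraph.fromRel_adj] <;> tauto

lemma dist_eq_of {V : Type*} (H : SimpleGraph V) (D : V → V → ℕ)
    (h0 : ∀ x, D x x = 0)
    (h1 : ∀ x y, x ≠ y → ∃ z, H.Adj x z ∧ D x y = D z y + 1)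
    (h2 : ∀ x z y, H.Adj x z → D x y ≤ D z y + 1) (x y : V) : H.dist x y = D x y := by
  have up : ∀ k x y, D x y = k → ∃ p : H.Walk x y, p.length = k := by
    intro k
    induction k with
    | zero =>
      intro x y h
      by_cases hxy : x = y
      · subst hxy; exact ⟨.nil, rfl⟩
      · obtain ⟨z, -, hz⟩ := h1 x y hxy
        omega
    | succ k ih =>
      intro x y h
      have hxy : x ≠ y := by rintro rfl; rw [h0] at h; omega
      obtain ⟨z, ha, hz⟩ := h1 x y hxy
      obtain ⟨p, hp⟩ := ih z y (by omega)
      exact ⟨.cons ha p, by simp [hp]⟩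
  have lo : ∀ x y (p : H.Walk x y), D x y ≤ p.length := by
    intro x y p
    induction p with
    | nil => simp [h0]
    | cons ha p ih =>
      have := h2 _ _ _ ha |>.trans (Nat.add_le_add_right ih 1)
      simpa using this
  obtain ⟨p, hp⟩ := up _ x y rfl
  apply le_antisymm
  · rw [← hp]; exact SimpleGraph.dist_le p
  · obtain ⟨q, hq⟩ := p.reachable.exists_walk_length_eq_dist
    rw [← hq]; exact lo x y q

lemma main_aux (n : ℕ) (c d : ZMod n)
    (h0 : ∀ x, fgD n c x x = 0)
    (h1 : ∀ x y, x ≠ y → ∃ z, fgA n c x z = true ∧ fgD n c x y = fgD n c z y + 1)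
    (h2 : ∀ x z y, fgA n c x z = true → fgD n c x y ≤ fgD n c z y + 1)
    (h3 : ∀ u v, ∃ x y, x ≠ y ∧ fgD n c x u = fgD n c y u ∧ fgD n c x v = fgD n c y v)
    (h4 : ∀ x y, x ≠ y → fgD n c x (.inl 0) ≠ fgD n c y (.inl 0) ∨
      fgD n c x (.inl 1) ≠ fgD n c y (.inl 1) ∨ fgD n c x (.inr (c+d)) ≠ fgD n c y (.inr (c+d)))
    (h01 : (0 : ZMod n) ≠ 1) :
    metricDim (functigraph (cycGraph n) (fun _ => c)) = 3 := by
  have hd : ∀ x y, (functigraph (cycGraph n) (fun _ => c)).dist x y = fgD n c x y :=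
    dist_eq_of _ _ h0 (by simpa only [fgA_iff] using h1) (by simpa only [fgA_iff] using h2)
  have hmem : (3 : ℕ) ∈ {k | ∃ S : Set (ZMod n ⊕ ZMod n),
      IsResolving (functigraph (cycGraph n) (fun _ => c)) S ∧ S.Finite ∧ S.ncard = k} := by
    refine ⟨{.inl 0, .inl 1, .inr (c+d)}, ?_, by simp, ?_⟩
    · intro x y hxy
      simp only [hd]
      simpa using h4 x y hxy
    · rw [Set.ncard_eq_three]
      exact ⟨_, _, _, by simpa using h01, by simp, by simp, rfl⟩
  apply le_antisymm (Nat.sInf_le hmem)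
  refine le_csInf ⟨_, hmem⟩ ?_
  rintro k ⟨S, hS, hf, rfl⟩
  by_contra hlt
  have hsub : ∃ u v, S ⊆ {u, v} := by
    have : S.ncard = 0 ∨ S.ncard = 1 ∨ S.ncard = 2 := by omega
    rcases this with h | h | h
    · rw [Set.ncard_eq_zero hf] at h
      exact ⟨.inl 0, .inl 0, by simp [h]⟩
    · obtain ⟨a, rfl⟩ := Set.ncard_eq_one.1 h
      exact ⟨a, a, by simp⟩
    · obtain ⟨a, b, -, rfl⟩ := Set.ncard_eq_two.1 h
      exact ⟨a, b, subset_rfl⟩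
  obtain ⟨u, v, huv⟩ := hsub
  obtain ⟨x, y, hxy, hu, hv⟩ := h3 u v
  obtain ⟨w, hw, hne⟩ := hS x y hxy
  rw [hd, hd] at hne
  rcases huv hw with rfl | rfl
  · exact hne hu
  · exact hne hv

set_option maxRecDepth 100000 in
theorem stmt13 (n : ℕ) (hn3 : 3 <= n) (hn5 : n <= 5) (f₀ : ZMod n -> ZMod n)
    (c : ZMod n) (hf : ∀ u, f₀ u = c) :
    metricDim (functigraph (cycGraph n) f₀) = 3 := by
  obtain rfl : f₀ = fun _ => c := funext hf
  clear hf
  obtain rfl | rfl | rfl : n = 3 ∨ n = 4 ∨ n = 5 := by omega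
  all_goals
    first
    | apply main_aux 5 c 2
    | apply main_aux _ c 1
    · revert c; decide +kernel
    · revert c; decide +kernel
    · revert c; decide +kernel
    · revert c; decide +kernel
    · revert c; decide +kernel
    · decide +kernel
end

section
/- Let Cₙ be the cycle of even order n ≥ 4, and let f₀ : V(G₁) → V(G₂) be a constant function between two disjoint copies G₁, G₂ of Cₙ. Then dim(C(Cₙ, f₀)) = ⌈2n/5⌉ + 1. -/
lemma dist_of_pot {V : Type*} (H : SimpleGraph V) (w : V) (g : V → ℕ) (h0 : ∀ x, g x = 0 → x = w)
    (hw : g w = 0)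
    (hl : ∀ x y, H.Adj x y → g x ≤ g y + 1)
    (hd : ∀ x, 0 < g x → ∃ y, H.Adj x y ∧ g x = g y + 1) (x : V) : H.dist x w = g x := by
  have A : ∀ k x, g x = k → ∃ p : H.Walk x w, p.length = k := by
    intro k
    induction k with
    | zero => intro x hx; obtain rfl := h0 x hx; exact ⟨.nil, rfl⟩
    | succ k ih =>
      intro x hx
      obtain ⟨y, hy, he⟩ := hd x (by omega)
      obtain ⟨p, hp⟩ := ih y (by omega)
      exact ⟨.cons hy p, by simp [hp]⟩
  have B : ∀ x z (p : H.Walk x z), g x ≤ g z + p.length := by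
    intro x z p
    induction p with
    | nil => simp
    | cons h p ih => have := hl _ _ h; simp; omega
  obtain ⟨p, hp⟩ := A _ x rfl
  apply le_antisymm
  · rw [← hp]; exact SimpleGraph.dist_le p
  · obtain ⟨q, hq⟩ := (SimpleGraph.Walk.reachable p).exists_walk_length_eq_dist
    have := B _ _ q
    omega

/-- circular norm -/
def rr {n : ℕ} (i : ZMod n) : ℕ := min i.val (n - i.val)

section
variable {n : ℕ}

lemma val_succ' (hn : 4 ≤ n) (i : ZMod n) :
    (i.val + 1 < n ∧ (i+1).val = i.val + 1) ∨ (i.val + 1 = n ∧ (i+1).val = 0) := by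
  have : NeZero n := ⟨by omega⟩
  have : Fact (1 < n) := ⟨by omega⟩
  have h := ZMod.val_lt i
  have h1 : (1 : ZMod n).val = 1 := ZMod.val_one n
  rcases Nat.lt_or_ge (i.val + 1) n with h2 | h2
  · left; refine ⟨h2, ?_⟩
    rw [ZMod.val_add_of_lt (by omega), h1]
  · right; refine ⟨by omega, ?_⟩
    rw [ZMod.val_add, h1, show i.val + 1 = n by omega, Nat.mod_self]

lemma val_pred' (hn : 4 ≤ n) (i : ZMod n) :
    (0 < i.val ∧ (i-1).val = i.val - 1) ∨ (i.val = 0 ∧ (i-1).val = n - 1) := by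
  have := val_succ' hn (i-1)
  rw [sub_add_cancel] at this
  omega

lemma vlt (hn : 4 ≤ n) (i : ZMod n) : i.val < n := by
  have : NeZero n := ⟨by omega⟩
  exact ZMod.val_lt i

lemma vinj (hn : 4 ≤ n) {i j : ZMod n} (h : i.val = j.val) : i = j := by
  have : NeZero n := ⟨by omega⟩
  exact ZMod.val_injective n h

lemma rr_zero_iff (hn : 4 ≤ n) (i : ZMod n) : rr i = 0 ↔ i = 0 := by
  have := vlt hn i
  constructor
  · intro h; apply vinj hn; rw [ZMod.val_zero]; unfold rr at h; omega
  · rintro rfl; simp [rr]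

lemma rr_succ (hn : 4 ≤ n) (i : ZMod n) : rr (i+1) ≤ rr i + 1 ∧ rr i ≤ rr (i+1) + 1 := by
  have := vlt hn i
  have := val_succ' hn i
  unfold rr; omega

lemma rr_down (hn : 4 ≤ n) (i : ZMod n) (h : 0 < rr i) :
    rr i = rr (i+1) + 1 ∨ rr i = rr (i-1) + 1 := by
  have := vlt hn i
  have := val_succ' hn i
  have := val_pred' hn i
  unfold rr at *; omega

lemma rr_up (hn : 4 ≤ n) (he : Even n) (i : ZMod n) (h : rr (i+1) ≠ rr (i-1)) :
    rr (i+1) = rr i + 1 ∨ rr (i-1) = rr i + 1 := by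
  have := vlt hn i
  have := val_succ' hn i
  have := val_pred' hn i
  obtain ⟨k, hk⟩ := he
  unfold rr at *; omega

lemma rr_inj (hn : 4 ≤ n) (x y : ZMod n) (h : rr x = rr y) (h' : rr (x-1) = rr (y-1)) : x = y := by
  have := vlt hn x
  have := val_pred' hn x
  have := vlt hn y
  have := val_pred' hn y
  apply vinj hn
  unfold rr at *; omega

lemma rr_one (hn : 4 ≤ n) : rr (1 : ZMod n) = 1 := by
  have := val_succ' hn (0 : ZMod n)
  rw [zero_add, ZMod.val_zero] at this
  unfold rr; omega

lemma rr_neg_one (hn : 4 ≤ n) : rr (-1 : ZMod n) = 1 := by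
  have := val_pred' hn (0 : ZMod n)
  rw [zero_sub, ZMod.val_zero] at this
  unfold rr; omega

lemma ne1 (hn : 4 ≤ n) (i : ZMod n) : i + 1 ≠ i := by
  intro h
  have := congrArg ZMod.val h
  have := val_succ' hn i
  omega

lemma cyc_adj (hn : 4 ≤ n) (a b : ZMod n) : (cycGraph n).Adj a b ↔ (b = a + 1 ∨ a = b + 1) := by
  unfold cycGraph
  rw [SimpleGraph.fromRel_adj]
  constructor
  · rintro ⟨_, h⟩; exact h
  · rintro h
    refine ⟨?_, h⟩
    rintro rfl
    rcases h with h | h <;> exact ne1 hn _ h.symm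

variable {f₀ : ZMod n → ZMod n} {c : ZMod n}

lemma adj_ll (hn : 4 ≤ n) (a b : ZMod n) :
    (functigraph (cycGraph n) f₀).Adj (.inl a) (.inl b) ↔ (b = a + 1 ∨ a = b + 1) := by
  rw [← cyc_adj hn]
  simp only [functigraph, SimpleGraph.fromRel_adj, (cycGraph n).adj_comm b a, or_self]
  constructor
  · exact fun h => h.2
  · exact fun h => ⟨fun e => h.ne (Sum.inl.inj e), h⟩

lemma adj_rr (hn : 4 ≤ n) (a b : ZMod n) :
    (functigraph (cycGraph n) f₀).Adj (.inr a) (.inr b) ↔ (b = a + 1 ∨ a = b + 1) := by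
  rw [← cyc_adj hn]
  simp only [functigraph, SimpleGraph.fromRel_adj, (cycGraph n).adj_comm b a, or_self]
  constructor
  · exact fun h => h.2
  · exact fun h => ⟨fun e => h.ne (Sum.inr.inj e), h⟩

lemma adj_lr (hf : ∀ u, f₀ u = c) (a b : ZMod n) :
    (functigraph (cycGraph n) f₀).Adj (.inl a) (.inr b) ↔ b = c := by
  simp [functigraph, SimpleGraph.fromRel_adj, hf, eq_comm]

lemma adj_rl (hf : ∀ u, f₀ u = c) (a b : ZMod n) :
    (functigraph (cycGraph n) f₀).Adj (.inr a) (.inl b) ↔ a = c := by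
  simp [functigraph, SimpleGraph.fromRel_adj, hf, eq_comm]

/-- distance to right vertices -/
def gr (c b : ZMod n) : ZMod n ⊕ ZMod n → ℕ
  | .inl _ => 1 + rr (c - b)
  | .inr a => rr (a - b)

/-- distance to left vertices -/
def gl (c d : ZMod n) : ZMod n ⊕ ZMod n → ℕ
  | .inl u => if u = d then 0 else if (d = u + 1 ∨ u = d + 1) then 1 else 2
  | .inr a => 1 + rr (a - c)

lemma dist_r (hn : 4 ≤ n) (hf : ∀ u, f₀ u = c) (b : ZMod n) (x) :
    (functigraph (cycGraph n) f₀).dist x (.inr b) = gr c b x := by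
  apply dist_of_pot
  · rintro (a | a) h
    · simp [gr] at h
    · simp only [gr, rr_zero_iff hn, sub_eq_zero] at h; rw [h]
  · simp [gr, rr_zero_iff hn]
  · rintro (a | a) (d | d) h
    · simp [gr]
    · rw [adj_lr hf] at h; subst h; simp only [gr]; omega
    · rw [adj_rl hf] at h; subst h; simp only [gr]; omega
    · rw [adj_rr hn] at h
      simp only [gr]
      rcases h with rfl | rfl
      · have := rr_succ hn (a - b)
        rw [show a + 1 - b = a - b + 1 by ring]; omega
      · have := rr_succ hn (d - b)
        rw [show d + 1 - b = d - b + 1 by ring]; omega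
  · rintro (a | a) h
    · exact ⟨.inr c, (adj_lr hf _ _).2 rfl, by simp only [gr]; omega⟩
    · simp only [gr] at h
      rcases rr_down hn _ h with h | h
      · exact ⟨.inr (a+1), (adj_rr hn _ _).2 (.inl rfl), by
          simp only [gr]; rw [h, show a + 1 - b = a - b + 1 by ring]⟩
      · exact ⟨.inr (a-1), (adj_rr hn _ _).2 (.inr (by ring)), by
          simp only [gr]; rw [h, show a - 1 - b = a - b - 1 by ring]⟩

lemma dist_l (hn : 4 ≤ n) (hf : ∀ u, f₀ u = c) (d : ZMod n) (x) :
    (functigraph (cycGraph n) f₀).dist x (.inl d) = gl c d x := by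
  apply dist_of_pot
  · rintro (a | a) h
    · simp only [gl] at h; split_ifs at h with h1; rw [h1]
    · simp [gl] at h
  · simp [gl]
  · rintro (a | a) (e | e) h
    · rw [adj_ll hn] at h
      simp only [gl]
      split_ifs <;> simp_all
    · simp only [gl]; split_ifs <;> omega
    · rw [adj_rl hf] at h; subst h; simp only [gl, sub_self, (rr_zero_iff hn _).2]; omega
    · rw [adj_rr hn] at h
      simp only [gl]
      rcases h with rfl | rfl
      · have := rr_succ hn (a - c)
        rw [show a + 1 - c = a - c + 1 by ring]; omega
      · have := rr_succ hn (e - c)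
        rw [show e + 1 - c = e - c + 1 by ring]; omega
  · rintro (a | a) h
    · by_cases h1 : a = d
      · simp [gl, h1] at h
      by_cases h2 : d = a + 1 ∨ a = d + 1
      · exact ⟨.inl d, (adj_ll hn _ _).2 h2, by simp [gl, h1, h2]⟩
      · exact ⟨.inr c, (adj_lr hf _ _).2 rfl, by simp [gl, h1, h2, rr_zero_iff hn]⟩
    · by_cases hz : rr (a - c) = 0
      · refine ⟨.inl d, ?_, by simp [gl, hz]⟩
        rw [rr_zero_iff hn, sub_eq_zero] at hz
        exact (adj_rl hf _ _).2 hz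
      rcases rr_down hn _ (Nat.pos_of_ne_zero hz) with h | h
      · exact ⟨.inr (a+1), (adj_rr hn _ _).2 (.inl rfl), by
          simp only [gl]; rw [h, show a + 1 - c = a - c + 1 by ring]; omega⟩
      · exact ⟨.inr (a-1), (adj_rr hn _ _).2 (.inr (by ring)), by
          simp only [gl]; rw [h, show a - 1 - c = a - c - 1 by ring]; omega⟩

/-- locating -/
def Loc (D : Finset (ZMod n)) : Prop :=
  ∀ u v, u ∉ D → v ∉ D → (u + 1 ∈ D ∨ u - 1 ∈ D) → 
    (∀ d ∈ D, (d = u + 1 ∨ u = d + 1) ↔ (d = v + 1 ∨ v = d + 1)) → u = v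

/-- dominating -/
def Dom (D : Finset (ZMod n)) : Prop :=
  ∀ u, u ∉ D → (u + 1 ∈ D ∨ u - 1 ∈ D)

lemma ld_bound (hn : 4 ≤ n) (D : Finset (ZMod n)) (hL : Loc D) (hD : Dom D) :
    2 * n ≤ 5 * D.card := by
  have : NeZero n := ⟨by omega⟩
  classical
  let φ : ZMod n × Bool → ZMod n × Fin 3 := fun p =>
    if p.1 + 1 ∈ D then
      if p.1 - 1 ∈ D then
        if p.2 then (p.1 + 1, 0) else (p.1 - 1, 1)
      else if p.2 then (p.1 + 1, 0) else (p.1 + 1, 2)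
    else if p.2 then (p.1 - 1, 1) else (p.1 - 1, 2)
  have key := Finset.card_le_card_of_injOn (s := Dᶜ ×ˢ (Finset.univ : Finset Bool))
    (t := D ×ˢ (Finset.univ : Finset (Fin 3))) φ ?_ ?_
  · rw [Finset.card_product, Finset.card_product, Finset.card_compl, ZMod.card] at key
    simp at key
    omega
  · rintro ⟨u, b⟩ hu
    simp at hu
    have := hD u hu
    simp only [Finset.coe_product, Set.mem_prod, φ]
    split_ifs <;> simp_all
  · rintro ⟨u, b⟩ hu ⟨v, b'⟩ hv h
    simp at hu hv
    have h1 := hD u hu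
    have h2 := hD v hv
    have h3 := hL u v hu hv h1
    simp only [φ] at h
    have hs : ∀ u d : ZMod n, u = d + 1 ↔ d = u - 1 := fun u d => by
      constructor
      · rintro rfl; ring
      · rintro rfl; ring
    simp only [hs] at h3
    have : u = v := by
      split_ifs at h <;> simp at h <;> first | exact h | (apply h3; intro d hd; grind)
    subst this
    split_ifs at h <;> simp_all
end
lemma ld_arith {n : ℕ} (hn5 : 5 ≤ n) (x y U1 U2 V2 U0 V1 V0: ℕ) (hx : x < n) (hy : y < n)
    (hxy : x < y)
    (h1 : x + 1 < n ∧ U1 = x + 1 ∨ x + 1 = n ∧ U1 = 0)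
    (h2 : y + 1 < n ∧ V1 = y + 1 ∨ y + 1 = n ∧ V1 = 0)
    (h3 : U1 + 1 < n ∧ U2 = U1 + 1 ∨ U1 + 1 = n ∧ U2 = 0)
    (h4 : V1 + 1 < n ∧ V2 = V1 + 1 ∨ V1 + 1 = n ∧ V2 = 0)
    (h5 : 0 < x ∧ U0 = x - 1 ∨ x = 0 ∧ U0 = n - 1)
    (h6 : 0 < y ∧ V0 = y - 1 ∨ y = 0 ∧ V0 = n - 1)
    (h7 : ¬(x % 5 = 1 ∨ x % 5 = 3 ∨ x + 1 = n ∧ n % 5 ≠ 0))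
    (h8 : ¬(y % 5 = 1 ∨ y % 5 = 3 ∨ y + 1 = n ∧ n % 5 ≠ 0))
    (h9 : (U1 % 5 = 1 ∨ U1 % 5 = 3 ∨ U1 + 1 = n ∧ n % 5 ≠ 0) → y = U2)
    (h10 : (U0 % 5 = 1 ∨ U0 % 5 = 3 ∨ U0 + 1 = n ∧ n % 5 ≠ 0) → x = V2)
    (h11 : (V1 % 5 = 1 ∨ V1 % 5 = 3 ∨ V1 + 1 = n ∧ n % 5 ≠ 0) → x = V2)
    (h12 : (V0 % 5 = 1 ∨ V0 % 5 = 3 ∨ V0 + 1 = n ∧ n % 5 ≠ 0) → y = U2) : False := by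
  have hm : x % 5 = 0 ∨ (0 < x ∧ (x % 5 = 2 ∨ x % 5 = 4)) := by clear h9 h10 h11 h12; omega
  have hU : U1 = x + 1 := by clear h9 h10 h11 h12 h7 h8; omega
  have hV : x = V2 → x = 0 ∧ y + 2 = n ∨ x = 1 := by clear h9 h10 h11 h12 h7 h8; omega
  rcases hm with hm | ⟨hp, hm⟩
  · have hy2 : y = U2 := h9 (by left; omega)
    have hy3 : y = x + 2 := by clear h9 h10 h11 h12 h7 h8; omega
    have hy4 : V1 = y + 1 := by clear h9 h10 h11 h12 h7; omega
    have := hV (h11 (by right; left; omega))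
    clear h9 h10 h11 h12 h7 h8; omega
  · have h0 : U0 = x - 1 := by clear h9 h10 h11 h12 h7 h8; omega
    have := hV (h10 (by clear h9 h10 h11 h12 h7 h8; omega))
    clear h9 h10 h11 h12 h7 h8; omega


lemma ld_exists {n : ℕ} (hn : 4 ≤ n) :
    ∃ D : Finset (ZMod n), Loc D ∧ Dom D ∧ D.card ≤ (2 * n + 4) / 5 := by
  have : NeZero n := ⟨by omega⟩
  rcases eq_or_ne n 4 with rfl | h4
  · refine ⟨{0, 1}, ?_, ?_, ?_⟩
    · unfold Loc; decide
    · unfold Dom; decide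
    · decide
  have hn5 : 5 ≤ n := by omega
  let D : Finset (ZMod n) := Finset.univ.filter fun u =>
    (u.val % 5 = 1 ∨ u.val % 5 = 3 ∨ (u.val + 1 = n ∧ n % 5 ≠ 0))
  have hD : ∀ u, u ∈ D ↔ (u.val % 5 = 1 ∨ u.val % 5 = 3 ∨ (u.val + 1 = n ∧ n % 5 ≠ 0)) := by
    intro u; simp [D]
  refine ⟨D, ?_, ?_, ?_⟩
  · intro u v hu hv hd h
    by_contra hne
    have hne' : u.val ≠ v.val := fun h => hne (vinj hn h)
    have a1 : u + 1 ∈ D → v = u + 1 + 1 := fun hm => by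
      rcases (h _ hm).1 (.inl rfl) with e | e
      · exact absurd (add_right_cancel e) hne
      · exact e
    have a2 : u - 1 ∈ D → u = v + 1 + 1 := fun hm => by
      rcases (h _ hm).1 (.inr (by ring)) with e | e
      · rw [← e]; ring
      · exact absurd (by rw [e]; ring) hne
    have a3 : v + 1 ∈ D → u = v + 1 + 1 := fun hm => by
      rcases (h _ hm).2 (.inl rfl) with e | e
      · exact absurd (add_right_cancel e).symm hne
      · exact e
    have a4 : v - 1 ∈ D → v = u + 1 + 1 := fun hm => by
      rcases (h _ hm).2 (.inr (by ring)) with e | e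
      · rw [← e]; ring
      · exact absurd (by rw [e]; ring) hne
    have b1 : u + 1 ∈ D → v.val = (u + 1 + 1).val := fun hm => congrArg _ (a1 hm)
    have b2 : u - 1 ∈ D → u.val = (v + 1 + 1).val := fun hm => congrArg _ (a2 hm)
    have b3 : v + 1 ∈ D → u.val = (v + 1 + 1).val := fun hm => congrArg _ (a3 hm)
    have b4 : v - 1 ∈ D → v.val = (u + 1 + 1).val := fun hm => congrArg _ (a4 hm)
    clear a1 a2 a3 a4 h hne
    rw [hD] at *
    have := vlt hn u
    have := vlt hn v
    have c1 := val_succ' hn u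
    have c2 := val_succ' hn v
    have c3 := val_succ' hn (u+1)
    have c4 := val_succ' hn (v+1)
    have c5 := val_pred' hn u
    have c6 := val_pred' hn v
    generalize (u+1+1).val = U2 at *
    generalize (v+1+1).val = V2 at *
    generalize (u+1).val = U1 at *
    generalize (v+1).val = V1 at *
    generalize (u-1).val = U0 at *
    generalize (v-1).val = V0 at *
    generalize u.val = x at *
    generalize v.val = y at *
    rcases lt_or_gt_of_ne hne' with hlt | hlt
    · exact ld_arith hn5 x y U1 U2 V2 U0 V1 V0 (by assumption) (by assumption) hlt c1 c2 c3 c4 c5 c6 hu hv b1 b2 b3 b4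
    · exact ld_arith hn5 y x V1 V2 U2 V0 U1 U0 (by assumption) (by assumption) hlt c2 c1 c4 c3 c6 c5 hv hu b3 b4 b1 b2
  · intro u hu
    rw [hD] at *
    rw [hD]
    have := vlt hn u
    have c1 := val_succ' hn u
    have c5 := val_pred' hn u
    omega
  · have key := Finset.card_le_card_of_injOn (s := D)
      (t := Finset.range ((2 * n + 4) / 5))
      (fun u => if u.val + 1 = n ∧ n % 5 ≠ 0 then (2 * n + 4) / 5 - 1 else
        2 * (u.val / 5) + u.val % 5 / 2) ?_ ?_
    · simpa using key
    · intro u hu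
      have hu := (hD u).1 hu
      have := vlt hn u
      simp only [Finset.coe_range, Set.mem_Iio]
      split_ifs <;> omega
    · intro u hu v hv h
      have hu := (hD u).1 hu
      have hv := (hD v).1 hv
      have := vlt hn u
      have := vlt hn v
      apply vinj hn
      simp only at h
      split_ifs at h <;> omega

lemma loc_of_res {n : ℕ} (hn : 4 ≤ n) {f₀ : ZMod n → ZMod n} {c : ZMod n} (hf : ∀ u, f₀ u = c)
    (S : Set (ZMod n ⊕ ZMod n)) (hS : IsResolving (functigraph (cycGraph n) f₀) S)
    (D : Finset (ZMod n)) (hD : ∀ u, u ∈ D ↔ Sum.inl u ∈ S) (u v : ZMod n) (hu : u ∉ D) (hv : v ∉ D)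
    (h : ∀ d ∈ D, (d = u + 1 ∨ u = d + 1) ↔ (d = v + 1 ∨ v = d + 1)) : u = v := by
  by_contra hne
  obtain ⟨w | w, hw, hw'⟩ := hS (.inl u) (.inl v) (by simpa using hne)
  · rw [← hD] at hw
    rw [dist_l hn hf, dist_l hn hf] at hw'
    apply hw'
    simp only [gl]
    rw [if_neg (show u ≠ w by rintro rfl; exact hu hw), if_neg (show v ≠ w by rintro rfl; exact hv hw)]
    simp only [h w hw]
  · rw [dist_r hn hf, dist_r hn hf] at hw'
    exact hw' rfl

lemma lower {n : ℕ} (hev : Even n) (hn : 4 ≤ n) {f₀ : ZMod n → ZMod n} {c : ZMod n}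
    (hf : ∀ u, f₀ u = c)
    (S : Set (ZMod n ⊕ ZMod n)) (hS : IsResolving (functigraph (cycGraph n) f₀) S) :
    (2 * n + 4) / 5 + 1 ≤ S.ncard := by
  classical
  have : NeZero n := ⟨by omega⟩
  let D : Finset (ZMod n) := Finset.univ.filter fun u => Sum.inl u ∈ S
  let T : Finset (ZMod n) := Finset.univ.filter fun u => Sum.inr u ∈ S
  have hD : ∀ u, u ∈ D ↔ Sum.inl u ∈ S := by simp [D]
  have hT : ∀ u, u ∈ T ↔ Sum.inr u ∈ S := by simp [T]
  have hcard : S.ncard = D.card + T.card := by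
    have : S = ((D.disjSum T : Finset _) : Set _) := by
      ext (x | x) <;> simp [hD, hT]
    rw [this, Set.ncard_coe_finset, Finset.card_disjSum]
  have hloc := loc_of_res hn hf S hS D hD
  -- a vertex on the right
  have hne : c + 1 ≠ c - 1 := by
    intro h
    have h1 := congrArg ZMod.val h
    have := val_succ' hn c
    have := val_pred' hn c
    omega
  obtain ⟨w | b, hw, hw'⟩ := hS (.inr (c+1)) (.inr (c-1)) (by simpa using hne)
  · exfalso
    rw [dist_l hn hf, dist_l hn hf] at hw'
    simp [gl, rr_one hn, rr_neg_one hn] at hw'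
  rw [dist_r hn hf, dist_r hn hf] at hw'
  simp only [gr] at hw'
  have hb : b ∈ T := (hT b).2 hw
  have hTpos : 1 ≤ T.card := Finset.card_pos.2 ⟨b, hb⟩
  by_cases hdom : Dom D
  · have := ld_bound hn D (fun u v hu hv _ h => hloc u v hu hv h) hdom
    omega
  · unfold Dom at hdom
    push Not at hdom
    obtain ⟨u, hu, hu1, hu2⟩ := hdom
    have hnd : ∀ d ∈ D, ¬ (d = u + 1 ∨ u = d + 1) := by
      rintro d hd (rfl | rfl)
      · exact hu1 hd
      · apply hu2; simpa using hd
    have hT2 : 2 ≤ T.card := by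
      by_contra hlt
      have hT1 : ∀ t ∈ T, t = b := fun t ht =>
        Finset.card_le_one.1 (by omega) t ht b hb
      have fin : ∀ e, rr (e - c) = 1 → rr (e - b) = rr (c - b) + 1 → False := by
        intro e he1 he2
        clear hw hw'
        obtain ⟨w | w, hw, hw'⟩ := hS (.inl u) (.inr e) (by simp)
        · rw [← hD] at hw
          rw [dist_l hn hf, dist_l hn hf] at hw'
          simp only [gl] at hw'
          rw [if_neg (by rintro rfl; exact hu hw), if_neg (hnd w hw)] at hw'
          omega
        · rw [← hT] at hw
          obtain rfl := hT1 w hw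
          rw [dist_r hn hf, dist_r hn hf] at hw'
          simp only [gr] at hw'
          omega
      rw [show c + 1 - b = c - b + 1 by ring, show c - 1 - b = c - b - 1 by ring] at hw'
      rcases rr_up hn hev _ hw' with h | h
      · exact fin (c+1) (by rw [show c + 1 - c = 1 by ring]; exact rr_one hn)
          (by rw [show c + 1 - b = c - b + 1 by ring]; exact h)
      · exact fin (c-1) (by rw [show c - 1 - c = -1 by ring]; exact rr_neg_one hn)
          (by rw [show c - 1 - b = c - b - 1 by ring]; exact h)
    have hb := ld_bound hn (insert u D) ?_ ?_
    · rw [Finset.card_insert_of_notMem hu] at hb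
      omega
    · intro x y hx hy _ h
      simp only [Finset.mem_insert, not_or] at hx hy
      exact hloc x y hx.2 hy.2 fun d hd => h d (Finset.mem_insert_of_mem hd)
    · intro x hx
      simp only [Finset.mem_insert, not_or] at hx
      by_contra hcon
      simp only [Finset.mem_insert, not_or] at hcon
      refine hx.1 (hloc x u hx.2 hu fun d hd => ?_)
      have := hnd d hd
      refine ⟨?_, fun h => absurd h this⟩
      rintro (rfl | rfl)
      · exact absurd hd hcon.1.2
      · exact absurd (by simpa using hd) hcon.2.2

lemma upper {n : ℕ} (hn : 4 ≤ n) {f₀ : ZMod n → ZMod n} {c : ZMod n}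
    (hf : ∀ u, f₀ u = c) :
    ∃ S : Set (ZMod n ⊕ ZMod n), IsResolving (functigraph (cycGraph n) f₀) S ∧ S.Finite ∧
      S.ncard ≤ (2 * n + 4) / 5 + 1 := by
  classical
  obtain ⟨D, hL, hD, hc⟩ := ld_exists hn
  refine ⟨((D.disjSum {c+1} : Finset _) : Set _), ?_, Finset.finite_toSet _, ?_⟩
  swap
  · rw [Set.ncard_coe_finset, Finset.card_disjSum]; simpa using hc
  have hd0 : ∃ d, d ∈ D := by
    by_cases h : (0 : ZMod n) ∈ D
    · exact ⟨_, h⟩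
    · rcases hD _ h with h | h <;> exact ⟨_, h⟩
  have hlr : ∀ u a, ∃ w ∈ ((D.disjSum {c+1} : Finset _) : Set _),
      (functigraph (cycGraph n) f₀).dist (.inl u) w ≠
      (functigraph (cycGraph n) f₀).dist (.inr a) w := by
    intro u a
    by_cases ha : a = c
    · subst ha
      refine ⟨.inr (a+1), by simp, ?_⟩
      rw [dist_r hn hf, dist_r hn hf]
      simp [gr]
    · have har : rr (a - c) ≠ 0 := by rwa [Ne, rr_zero_iff hn, sub_eq_zero]
      have : ∃ d ∈ D, (u = d ∨ d = u + 1 ∨ u = d + 1) := by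
        by_cases hu : u ∈ D
        · exact ⟨u, hu, .inl rfl⟩
        · rcases hD _ hu with h | h
          · exact ⟨_, h, .inr (.inl rfl)⟩
          · exact ⟨_, h, .inr (.inr (by ring))⟩
      obtain ⟨d, hd, h⟩ := this
      refine ⟨.inl d, by simpa using hd, ?_⟩
      rw [dist_l hn hf, dist_l hn hf]
      simp only [gl]
      split_ifs <;> first | omega | tauto
  rintro (u | a) (v | b) hne
  · have hne : u ≠ v := by simpa using hne
    by_cases hu : u ∈ D
    · refine ⟨.inl u, by simpa using hu, ?_⟩
      rw [dist_l hn hf, dist_l hn hf]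
      simp only [gl, if_true, if_neg hne.symm]
      split_ifs <;> omega
    by_cases hv : v ∈ D
    · refine ⟨.inl v, by simpa using hv, ?_⟩
      rw [dist_l hn hf, dist_l hn hf]
      simp only [gl, if_true, if_neg hne]
      split_ifs <;> omega
    by_contra hcon
    push Not at hcon
    refine hne (hL u v hu hv (hD u hu) fun d hd => ?_)
    have := hcon (.inl d) (by simpa using hd)
    rw [dist_l hn hf, dist_l hn hf] at this
    simp only [gl] at this
    rw [if_neg (show u ≠ d by rintro rfl; exact hu hd), if_neg (show v ≠ d by rintro rfl; exact hv hd)] at this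
    split_ifs at this <;> tauto
  · exact hlr u b
  · obtain ⟨w, hw, h⟩ := hlr v a
    exact ⟨w, hw, h.symm⟩
  · by_contra hcon
    push Not at hcon
    obtain ⟨d, hd⟩ := hd0
    have h1 := hcon (.inl d) (by simpa using hd)
    have h2 := hcon (.inr (c+1)) (by simp)
    rw [dist_l hn hf, dist_l hn hf] at h1
    rw [dist_r hn hf, dist_r hn hf] at h2
    simp only [gl, gr] at h1 h2
    have := rr_inj hn (a - c) (b - c) (by omega) (by rwa [sub_sub, sub_sub])
    apply hne
    rw [sub_left_injective this]

theorem stmt15 (n : ℕ) (hev : Even n) (hn : 4 <= n) (f₀ : ZMod n -> ZMod n)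
    (c : ZMod n) (hf : ∀ u, f₀ u = c) :
    metricDim (functigraph (cycGraph n) f₀) = ⌈(2 * (n : ℚ)) / 5⌉₊ + 1 := by
  have hc : ⌈(2 * (n : ℚ)) / 5⌉₊ = (2 * n + 4) / 5 := by
    rw [Nat.ceil_eq_iff (by omega)]
    have h1 : (2 * n + 4) / 5 - 1 = (2 * n - 1) / 5 := by omega
    constructor
    · rw [lt_div_iff₀ (by norm_num)]
      have : ((2 * n + 4) / 5 - 1) * 5 < 2 * n := by omega
      exact_mod_cast this
    · rw [div_le_iff₀ (by norm_num)]
      have : 2 * n ≤ ((2 * n + 4) / 5) * 5 := by omega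
      exact_mod_cast this
  rw [hc]
  obtain ⟨S, h1, h2, h3⟩ := upper hn hf
  apply le_antisymm
  · exact le_trans (Nat.sInf_le ⟨S, h1, h2, rfl⟩) h3
  · refine le_csInf ⟨S.ncard, S, h1, h2, rfl⟩ ?_
    rintro k ⟨S', h1', _, rfl⟩
    exact lower hev hn hf S' h1'
end

section
/- Let Cₙ be the cycle of order n ≥ 3 with two disjoint copies G₁ (vertices u₁,…,uₙ) and G₂ (vertices v₁,…,vₙ), and let f₀ : V(G₁) → V(G₂) be the constant function f₀(uᵢ) = v₁ for all i. Then every resolving set S of C(Cₙ, f₀) contains at least two vertices of G₁ and at least one vertex of V(G₂) − {v₁}. -/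
theorem aux_dist {V : Type*} (H : SimpleGraph V) (e : H ≃g H) (x y : V) :
    H.dist (e x) (e y) = H.dist x y := by
  have key : ∀ (e : H ≃g H) (x y : V), H.Reachable x y → H.dist (e x) (e y) ≤ H.dist x y := by
    intro e x y h
    obtain ⟨p, hp⟩ := h.exists_walk_length_eq_dist
    rw [← hp, ← SimpleGraph.Walk.length_map e.toHom p]
    exact SimpleGraph.dist_le _
  by_cases h : H.Reachable x y
  · apply le_antisymm (key e x y h)
    have h' : H.Reachable (e x) (e y) := h.map e.toHom
    simpa using key e.symm _ _ h'
  · have h' : ¬ H.Reachable (e x) (e y) := by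
      intro h'
      apply h
      simpa using (SimpleGraph.Iso.reachable_iff (φ := e)).1 h'
    rw [SimpleGraph.dist_eq_zero_of_not_reachable h, SimpleGraph.dist_eq_zero_of_not_reachable h']

theorem aux_cyc (n : ℕ) (c a b : ZMod n) :
    (cycGraph n).Adj (c - a) (c - b) ↔ (cycGraph n).Adj a b := by
  simp only [cycGraph, SimpleGraph.fromRel_adj]
  grind

/-- Automorphism from permutations of the two cycles. -/
def auxIso (n : ℕ) (s t : Equiv.Perm (ZMod n))
    (hs : ∀ a b, (cycGraph n).Adj (s a) (s b) ↔ (cycGraph n).Adj a b)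
    (ht : ∀ a b, (cycGraph n).Adj (t a) (t b) ↔ (cycGraph n).Adj a b) (h0 : ∀ a, 0 = t a ↔ 0 = a) :
    functigraph (cycGraph n) (fun _ => (0 : ZMod n)) ≃g
      functigraph (cycGraph n) (fun _ => (0 : ZMod n)) where
  toEquiv := Equiv.sumCongr s t
  map_rel_iff' := by
    rintro (a | a) (b | b) <;>
      simp [functigraph, SimpleGraph.fromRel_adj, hs, ht, h0]

theorem aux_ne (n : ℕ) (hn : 3 ≤ n) (u : ZMod n) : u + 1 ≠ u - 1 := by
  intro h
  have h2 : ((2 : ℕ) : ZMod n) = 0 := by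
    push_cast
    linear_combination h
  rw [ZMod.natCast_eq_zero_iff] at h2
  have := Nat.le_of_dvd (by norm_num) h2
  omega

theorem stmt18 (n : ℕ) (hn : 3 <= n) (S : Set (ZMod n ⊕ ZMod n))
    (hres : IsResolving (functigraph (cycGraph n) (fun _ => (0 : ZMod n))) S) :
    2 <= {u : ZMod n | Sum.inl u ∈ S}.ncard ∧
    ∃ w : ZMod n, w ≠ 0 ∧ Sum.inr w ∈ S := by
  have : NeZero n := ⟨by omega⟩
  constructor
  · by_contra hlt
    have h1 : {u : ZMod n | Sum.inl u ∈ S}.ncard ≤ 1 := by omega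
    obtain ⟨u, hu⟩ := (Set.ncard_le_one_iff_subset_singleton (Set.toFinite _)).1 h1
    let e := auxIso n (Equiv.subLeft (u + u)) (Equiv.refl _)
      (fun a b => by simpa using aux_cyc n (u + u) a b) (fun a b => Iff.rfl) (fun a => Iff.rfl)
    obtain ⟨w, hw, hd⟩ := hres (Sum.inl (u + 1)) (Sum.inl (u - 1))
      (fun h => aux_ne n hn u (Sum.inl.inj h))
    apply hd
    have he : e (Sum.inl (u + 1)) = Sum.inl (u - 1) := by
      change Sum.inl (u + u - (u + 1)) = Sum.inl (u - 1)
      congr 1; ring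
    have hew : e w = w := by
      rcases w with a | a
      · have : a = u := hu hw
        subst this
        change Sum.inl (a + a - a) = Sum.inl a
        congr 1; ring
      · rfl
    have := aux_dist _ e (Sum.inl (u + 1)) w
    rw [he, hew] at this
    exact this.symm
  · by_contra hne
    push Not at hne
    let e := auxIso n (Equiv.refl _) (Equiv.subLeft 0) (fun a b => Iff.rfl)
      (fun a b => by simpa only [Equiv.subLeft_apply] using aux_cyc n 0 a b)
      (fun a => by simp [eq_comm])
    obtain ⟨w, hw, hd⟩ := hres (Sum.inr (0 + 1)) (Sum.inr (0 - 1))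
      (fun h => aux_ne n hn 0 (Sum.inr.inj h))
    apply hd
    have he : e (Sum.inr (0 + 1)) = Sum.inr (0 - 1) := by
      change Sum.inr ((0 : ZMod n) - (0 + 1)) = Sum.inr (0 - 1)
      congr 1; ring
    have hew : e w = w := by
      rcases w with a | a
      · rfl
      · have : a = 0 := by
          by_contra h
          exact hne a h hw
        subst this
        change Sum.inr ((0 : ZMod n) - 0) = Sum.inr 0
        congr 1; ring
    have := aux_dist _ e (Sum.inr (0 + 1)) w
    rw [he, hew] at this
    exact this.symm
end
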